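/- Let J_c = 1/(4(3−2√2)) and h_c = (1/2)log(2√2−2) − 1/4, and suppose (J,h) = (J_c,h_c). Then the unique maximizer of 𝑝̃ on [0,1] is m_c = 2−√2, λ_c := −𝑝̃⁽⁴⁾(m_c) > 0, and there exists a constant K (independent of N) such that for all N ≥ 1, sup_{z∈ℝ} |ℙ((|𝓜(D)| − N·m_c)/N^{3/4} ≤ z) − ℙ(Y ≤ z)| ≤ K/N^{1/4}, where D is drawn from the IMD Gibbs measure and Y is a real random variable with probability density c·e^{−λ_c z⁴/24}, c being the normalizing constant. -/

import Mathlib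

open Real Finset MeasureTheory

noncomputable section

/-- Dimer configurations (matchings of the complete graph on `Fin N`), encoded as
involutions of `Fin N`: fixed points are monomers, 2-cycles are dimers. -/
abbrev Dimer (N : ℕ) := {f : Fin N → Fin N // ∀ i, f (f i) = i}

/-- The set of monomers (dimer-free vertices) of a dimer configuration. -/
def monomers {N : ℕ} (D : Dimer N) : Finset (Fin N) :=
  Finset.univ.filter fun i => D.1 i = i

/-- Monomer density `m(D) = |𝓜(D)|/N`. -/
def mDim {N : ℕ} (D : Dimer N) : ℝ := ((monomers D).card : ℝ) / N

/-- The parameter `b = (log N)/2 + h - J`. -/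
def bIMD (N : ℕ) (J h : ℝ) : ℝ := Real.log N / 2 + h - J

/-- The Gibbs weight `exp(-H(D)) = exp(N (a m(D)^2 + b m(D)))` with `a = J`. -/
def wDim (N : ℕ) (J h : ℝ) (D : Dimer N) : ℝ :=
  Real.exp (N * (J * mDim D ^ 2 + bIMD N J h * mDim D))

/-- The probability of an event `A` under the IMD Gibbs measure. -/
def probDim (N : ℕ) (J h : ℝ) (A : Dimer N → Prop) : ℝ :=
  (∑ D : Dimer N, Set.indicator {D | A D} (wDim N J h) D) / ∑ D : Dimer N, wDim N J h D

/-- The conditional probability `ℙ(A | B)` under the IMD Gibbs measure. -/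
def condProbDim (N : ℕ) (J h : ℝ) (A B : Dimer N → Prop) : ℝ :=
  (∑ D : Dimer N, Set.indicator {D | A D ∧ B D} (wDim N J h) D) /
    ∑ D : Dimer N, Set.indicator {D | B D} (wDim N J h) D

/-- `g(x) = (√(e^{4x} + 4 e^{2x}) - e^{2x})/2`. -/
def gFun (x : ℝ) : ℝ := (Real.sqrt (Real.exp (4*x) + 4 * Real.exp (2*x)) - Real.exp (2*x)) / 2

/-- `τ(x) = (2x-1)J + h`. -/
def tauFun (J h x : ℝ) : ℝ := (2*x - 1) * J + h

/-- `𝑝̃(m) = -J m² - (1 - g(τ(m)) + log(1 - g(τ(m))))/2`. -/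
def ptilde (J h m : ℝ) : ℝ :=
  -J * m^2 - (1 - gFun (tauFun J h m) + Real.log (1 - gFun (tauFun J h m))) / 2

/-- The CDF of a centered Gaussian with variance `v`, evaluated at `z`. -/
def gaussCDF (v : ℝ) (z : ℝ) : ℝ :=
  (ProbabilityTheory.gaussianReal 0 (Real.toNNReal v) (Set.Iic z)).toReal

/-- Spin configurations `Σ = {0,1}^N`. -/
abbrev Config (N : ℕ) := Fin N → Bool

/-- `𝓐(σ) = {i : σ_i = 1}`. -/
def ASet {N : ℕ} (σ : Config N) : Finset (Fin N) := Finset.univ.filter fun i => σ i = true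

/-- `M(σ) = ∑ σ_i`. -/
def Msum {N : ℕ} (σ : Config N) : ℕ := (ASet σ).card

/-- Magnetization `m(σ) = M(σ)/N`. -/
def mConf {N : ℕ} (σ : Config N) : ℝ := (Msum σ : ℝ) / N

/-- `D(σ)`: the number of dimer configurations `D` with `𝓜(D) = 𝓐(σ)`. -/
def Dcount (N : ℕ) (σ : Config N) : ℕ :=
  (Finset.univ.filter fun D : Dimer N => monomers D = ASet σ).card

/-- The weight `D(σ) exp(-H(σ))` of the weighted Curie–Weiss model. -/
def wConf (N : ℕ) (J h : ℝ) (σ : Config N) : ℝ :=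
  (Dcount N σ : ℝ) * Real.exp (N * (J * mConf σ ^ 2 + bIMD N J h * mConf σ))

/-- The probability of an event `A` under the weighted Curie–Weiss Gibbs measure. -/
def probConf (N : ℕ) (J h : ℝ) (A : Config N → Prop) : ℝ :=
  (∑ σ : Config N, Set.indicator {σ | A σ} (wConf N J h) σ) / ∑ σ : Config N, wConf N J h σ

/-- Expectation under the weighted Curie–Weiss Gibbs measure. -/
def EConf (N : ℕ) (J h : ℝ) (f : Config N → ℝ) : ℝ :=
  (∑ σ : Config N, wConf N J h σ * f σ) / ∑ σ : Config N, wConf N J h σ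

/-- `L₁(m) = 2(1-m)(m² - (1-m)e^{2τ(m)})/((1-m) + e^{2τ(m)})`. -/
def Lone (J h m : ℝ) : ℝ :=
  2*(1-m)*(m^2 - (1-m)*Real.exp (2 * tauFun J h m)) / ((1-m) + Real.exp (2 * tauFun J h m))

/-- `L₂(m) = 4(1-m)(m² + (1-m)e^{2τ(m)})/((1-m) + e^{2τ(m)})`. -/
def Ltwo (J h m : ℝ) : ℝ :=
  4*(1-m)*(m^2 + (1-m)*Real.exp (2 * tauFun J h m)) / ((1-m) + Real.exp (2 * tauFun J h m))

/-- The configuration obtained from `σ` by setting the spins at `u, v` to `s, t`. -/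
def upd {N : ℕ} (σ : Config N) (u v : Fin N) (s t : Bool) : Config N :=
  fun i => if i = u then s else if i = v then t else σ i

/-- The edges of the complete graph, enumerated as ordered pairs `u < v`. -/
def cEdges (N : ℕ) : Finset (Fin N × Fin N) := Finset.univ.filter fun p => p.1 < p.2

/-- The probability of resampling the pair of spins at `(u,v)` to `(s,t)`:
the conditional distribution of `(σ_u, σ_v)` given `(σ_i)_{i ≠ u,v}`. -/
def qCond (N : ℕ) (J h : ℝ) (σ : Config N) (u v : Fin N) (s t : Bool) : ℝ :=
  wConf N J h (upd σ u v s t) / ∑ st : Bool × Bool, wConf N J h (upd σ u v st.1 st.2)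

/-- `E[F(σ, σ') | σ]` for the exchangeable pair `(σ, σ')` obtained by resampling the
spins at a uniformly chosen edge. -/
def condE2 (N : ℕ) (J h : ℝ) (F : Config N → Config N → ℝ) (σ : Config N) : ℝ :=
  ((cEdges N).card : ℝ)⁻¹ * ∑ p ∈ cEdges N, ∑ st : Bool × Bool,
    qCond N J h σ p.1 p.2 st.1 st.2 * F σ (upd σ p.1 p.2 st.1 st.2)

/-- The weight of the Gibbs measure conditioned on the event `S`. -/
def wCond (N : ℕ) (J h : ℝ) (S : Config N → Prop) (σ : Config N) : ℝ :=
  Set.indicator {σ | S σ} (wConf N J h) σ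

/-- `ℙ_ℓ(A) = ℙ(A | S)`, probability under the conditioned Gibbs measure. -/
def probL (N : ℕ) (J h : ℝ) (S A : Config N → Prop) : ℝ :=
  (∑ σ : Config N, Set.indicator {σ | A σ} (wCond N J h S) σ) / ∑ σ : Config N, wCond N J h S σ

/-- Expectation under the conditioned Gibbs measure `ℙ(·|S)`. -/
def EL (N : ℕ) (J h : ℝ) (S : Config N → Prop) (f : Config N → ℝ) : ℝ :=
  (∑ σ : Config N, wCond N J h S σ * f σ) / ∑ σ : Config N, wCond N J h S σ

/-- Resampling probability for the conditioned measure `ℙ(·|S)`. -/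
def qCondL (N : ℕ) (J h : ℝ) (S : Config N → Prop) (σ : Config N) (u v : Fin N)
    (s t : Bool) : ℝ :=
  wCond N J h S (upd σ u v s t) / ∑ st : Bool × Bool, wCond N J h S (upd σ u v st.1 st.2)

/-- `E_ℓ[F(σ, σ') | σ]` for the exchangeable pair under the conditioned measure. -/
def condE2L (N : ℕ) (J h : ℝ) (S : Config N → Prop) (F : Config N → Config N → ℝ)
    (σ : Config N) : ℝ :=
  ((cEdges N).card : ℝ)⁻¹ * ∑ p ∈ cEdges N, ∑ st : Bool × Bool,
    qCondL N J h S σ p.1 p.2 st.1 st.2 * F σ (upd σ p.1 p.2 st.1 st.2)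

/-- The maximizer set `O` of `𝑝̃` on `[0,1]`. -/
def maxSet (J h : ℝ) : Set ℝ :=
  {x | x ∈ Set.Icc (0:ℝ) 1 ∧ ∀ y ∈ Set.Icc (0:ℝ) 1, ptilde J h y ≤ ptilde J h x}

end

/-!
The proof is by Stein's method. Removing and adding dimers one at a time is a chain that is
reversible for the Gibbs measure, so the monomer density `m` satisfies a detailed balance relation
with jumps `± 2 / N`, and the difference of its jump rates is `drift J h m` up to `O(1 / N)`. At the
critical point the drift has a triple zero at `m_c` and pulls towards `m_c` on the rest of `[0, 1]`.
Testing detailed balance with `m - m_c` thus gives `𝔼 (m - m_c) ^ 4 = O(1 / N)`, which makes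
`X = N ^ (1 / 4) * (m - m_c)` the natural variable, and its drift is a multiple of the score
`λ_c x ^ 3 / 6` of the density `c * exp (-λ_c x ^ 4 / 24)`. Testing with the solution of Stein's
equation for `1_{· ≤ z}`, which is bounded and `3`-Lipschitz for every log-concave density, compares
`ℙ (X ≤ z)` with the limiting distribution function up to `O(N ^ (-1 / 4))`. The drift factors
through `g (τ m) - m`, of which `𝑝̃'` is a positive multiple; hence the unique maximizer.
-/
section LogConcaveDensity

open Set Filter Topology

/-- A positive probability density `φ` on `ℝ` with monotone score `ψ = -(log φ)'`; the score is
carried as data so that Stein's equation `f' = ψ f + 1_{· ≤ z} - F z` can be stated with it. -/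
structure IsLogConcaveDensity (φ ψ : ℝ → ℝ) : Prop where
  pos : ∀ x, 0 < φ x
  hasDerivAt : ∀ x, HasDerivAt φ (-(ψ x * φ x)) x
  monotone : Monotone ψ
  integral_eq_one : ∫ x, φ x = 1

/-- The distribution function `x ↦ ∫_{-∞}^x φ` of a density `φ`. -/
noncomputable def densityCDF (φ : ℝ → ℝ) (x : ℝ) : ℝ := ∫ t in Iic x, φ t

/-- The bounded solution of Stein's equation `f' = ψ f + 1_{· ≤ z} - F z` of a log-concave density
`φ` with score `ψ` and distribution function `F`. -/
noncomputable def steinSolution (φ : ℝ → ℝ) (z x : ℝ) : ℝ :=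
  densityCDF φ (min x z) * (1 - densityCDF φ (max x z)) / φ x

theorem tendsto_densityCDF_atBot (φ : ℝ → ℝ) : Tendsto (densityCDF φ) atBot (𝓝 0) :=
  tendsto_integral_Iic_zero tendsto_id

theorem steinSolution_of_le (φ : ℝ → ℝ) {z x : ℝ} (hx : x ≤ z) :
    steinSolution φ z x = densityCDF φ x * (1 - densityCDF φ z) / φ x := by
  rw [steinSolution, min_eq_left hx, max_eq_right hx]

theorem steinSolution_of_ge (φ : ℝ → ℝ) {z x : ℝ} (hx : z ≤ x) :
    steinSolution φ z x = densityCDF φ z * (1 - densityCDF φ x) / φ x := by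
  rw [steinSolution, min_eq_right hx, max_eq_left hx]

namespace IsLogConcaveDensity

variable {φ ψ : ℝ → ℝ}

theorem continuous (h : IsLogConcaveDensity φ ψ) : Continuous φ :=
  continuous_iff_continuousAt.2 fun x => (h.hasDerivAt x).continuousAt

theorem integrable (h : IsLogConcaveDensity φ ψ) : Integrable φ :=
  .of_integral_ne_zero (by simp [h.integral_eq_one])

theorem hasDerivAt_densityCDF (h : IsLogConcaveDensity φ ψ) (x : ℝ) :
    HasDerivAt (densityCDF φ) (φ x) x := by
  have split : densityCDF φ = fun x => densityCDF φ 0 + ∫ t in (0 : ℝ)..x, φ t := by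
    funext x
    rw [← intervalIntegral.integral_Iic_sub_Iic h.integrable.integrableOn h.integrable.integrableOn]
    exact (add_sub_cancel _ _).symm
  rw [split]
  exact (h.continuous.integral_hasStrictDerivAt 0 x).hasDerivAt.const_add _

theorem continuous_densityCDF (h : IsLogConcaveDensity φ ψ) : Continuous (densityCDF φ) :=
  continuous_iff_continuousAt.2 fun x => (h.hasDerivAt_densityCDF x).continuousAt

theorem monotone_densityCDF (h : IsLogConcaveDensity φ ψ) : Monotone (densityCDF φ) :=
  monotone_of_hasDerivAt_nonneg h.hasDerivAt_densityCDF fun x => (h.pos x).le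

theorem tendsto_densityCDF_atTop (h : IsLogConcaveDensity φ ψ) :
    Tendsto (densityCDF φ) atTop (𝓝 1) :=
  h.integral_eq_one ▸
    (aecover_Iic tendsto_id).integral_tendsto_of_countably_generated h.integrable

theorem densityCDF_nonneg (h : IsLogConcaveDensity φ ψ) (x : ℝ) : 0 ≤ densityCDF φ x :=
  h.monotone_densityCDF.le_of_tendsto (tendsto_densityCDF_atBot φ) x

theorem densityCDF_le_one (h : IsLogConcaveDensity φ ψ) (x : ℝ) : densityCDF φ x ≤ 1 :=
  h.monotone_densityCDF.ge_of_tendsto h.tendsto_densityCDF_atTop x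

theorem densityCDF_sub_le (h : IsLogConcaveDensity φ ψ) {L : ℝ} (hL : ∀ x, φ x ≤ L) {x y : ℝ}
    (hxy : x ≤ y) : densityCDF φ y - densityCDF φ x ≤ L * (y - x) :=
  image_sub_le_mul_sub_of_deriv_le (fun x => (h.hasDerivAt_densityCDF x).differentiableAt)
    (fun x => (h.hasDerivAt_densityCDF x).deriv.trans_le (hL x)) hxy

-- As a function of `y` the left-hand side has derivative `(ψ x - ψ y) φ y`.
theorem add_mul_densityCDF_le (h : IsLogConcaveDensity φ ψ) (x y : ℝ) :
    φ y + ψ x * densityCDF φ y ≤ φ x + ψ x * densityCDF φ x := by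
  have hderiv (t : ℝ) :
      HasDerivAt (fun t => φ t + ψ x * densityCDF φ t) ((ψ x - ψ t) * φ t) t :=
    ((h.hasDerivAt t).add ((h.hasDerivAt_densityCDF t).const_mul _)).congr_deriv (by ring)
  have hcont : Continuous fun t => φ t + ψ x * densityCDF φ t :=
    continuous_iff_continuousAt.2 fun t => (hderiv t).continuousAt
  rcases le_total y x with hyx | hxy
  · refine monotoneOn_of_hasDerivWithinAt_nonneg (convex_Iic x) hcont.continuousOn
      (fun t _ => (hderiv t).hasDerivWithinAt) (fun t ht => ?_) hyx self_mem_Iic hyx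
    have htx : t ≤ x := mem_Iic.1 (interior_subset ht)
    exact mul_nonneg (sub_nonneg.2 (h.monotone htx)) (h.pos t).le
  · refine antitoneOn_of_hasDerivWithinAt_nonpos (convex_Ici x) hcont.continuousOn
      (fun t _ => (hderiv t).hasDerivWithinAt) (fun t ht => ?_) self_mem_Ici hxy hxy
    have hxt : x ≤ t := mem_Ici.1 (interior_subset ht)
    exact mul_nonpos_of_nonpos_of_nonneg (sub_nonpos.2 (h.monotone hxt)) (h.pos t).le

theorem mul_one_sub_densityCDF_le (h : IsLogConcaveDensity φ ψ) (x : ℝ) :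
    ψ x * (1 - densityCDF φ x) ≤ φ x := by
  have hlim : ψ x * 1 ≤ φ x + ψ x * densityCDF φ x :=
    le_of_tendsto' (h.tendsto_densityCDF_atTop.const_mul _) fun y => by
      linarith [h.add_mul_densityCDF_le x y, h.pos y]
  linarith

theorem neg_mul_densityCDF_le (h : IsLogConcaveDensity φ ψ) (x : ℝ) :
    -ψ x * densityCDF φ x ≤ φ x := by
  have hlim : ψ x * 0 ≤ φ x + ψ x * densityCDF φ x :=
    le_of_tendsto' ((tendsto_densityCDF_atBot φ).const_mul _) fun y => by
      linarith [h.add_mul_densityCDF_le x y, h.pos y]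
  linarith

theorem abs_mul_densityCDF_mul_one_sub_le (h : IsLogConcaveDensity φ ψ) (x : ℝ) :
    |ψ x| * (densityCDF φ x * (1 - densityCDF φ x)) ≤ φ x := by
  have hF := h.densityCDF_nonneg x
  have hF' := h.densityCDF_le_one x
  have hφ := (h.pos x).le
  rcases abs_cases (ψ x) with ⟨hψ, -⟩ | ⟨hψ, -⟩ <;> rw [hψ]
  · nlinarith [h.mul_one_sub_densityCDF_le x]
  · nlinarith [h.neg_mul_densityCDF_le x]

theorem exists_score_pos (h : IsLogConcaveDensity φ ψ) : ∃ x, 0 < ψ x := by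
  by_contra! hψ
  have hmono : Monotone φ := monotone_of_hasDerivAt_nonneg h.hasDerivAt fun x =>
    neg_nonneg.2 (mul_nonpos_of_nonpos_of_nonneg (hψ x) (h.pos x).le)
  have hconst : IntegrableOn (fun _ : ℝ => φ 0) (Ici 0) :=
    Integrable.mono' h.integrable.integrableOn (by fun_prop) <|
      (ae_restrict_iff' measurableSet_Ici).2 <| .of_forall fun x hx => by
        rw [Real.norm_of_nonneg (h.pos 0).le]; exact hmono hx
  simp [integrableOn_const_iff, (h.pos 0).ne'] at hconst

theorem exists_score_neg (h : IsLogConcaveDensity φ ψ) : ∃ x, ψ x < 0 := by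
  by_contra! hψ
  have hanti : Antitone φ := antitone_of_hasDerivAt_nonpos h.hasDerivAt fun x =>
    neg_nonpos.2 (mul_nonneg (hψ x) (h.pos x).le)
  have hconst : IntegrableOn (fun _ : ℝ => φ 0) (Iic 0) :=
    Integrable.mono' h.integrable.integrableOn (by fun_prop) <|
      (ae_restrict_iff' measurableSet_Iic).2 <| .of_forall fun x hx => by
        rw [Real.norm_of_nonneg (h.pos 0).le]; exact hanti hx
  simp [integrableOn_const_iff, (h.pos 0).ne'] at hconst

theorem exists_densityCDF_mul_one_sub_le (h : IsLogConcaveDensity φ ψ) :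
    ∃ C, ∀ x, densityCDF φ x * (1 - densityCDF φ x) ≤ C * φ x := by
  obtain ⟨a, ha⟩ := h.exists_score_pos
  obtain ⟨b, hb⟩ := h.exists_score_neg
  have hcont : Continuous fun x => densityCDF φ x * (1 - densityCDF φ x) / φ x :=
    (h.continuous_densityCDF.mul (continuous_const.sub h.continuous_densityCDF)).div h.continuous
      fun x => (h.pos x).ne'
  obtain ⟨C, hC⟩ := isCompact_Icc.exists_bound_of_continuousOn (s := Icc b a) hcont.continuousOn
  have htail {x r : ℝ} (hr : 0 < r) (hrx : r ≤ |ψ x|) :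
      densityCDF φ x * (1 - densityCDF φ x) ≤ r⁻¹ * φ x := by
    rw [inv_mul_eq_div, le_div_iff₀' hr]
    have hF := mul_nonneg (h.densityCDF_nonneg x) (sub_nonneg.2 (h.densityCDF_le_one x))
    exact (mul_le_mul_of_nonneg_right hrx hF).trans (h.abs_mul_densityCDF_mul_one_sub_le x)
  refine ⟨max C (max (ψ a)⁻¹ (-ψ b)⁻¹), fun x => ?_⟩
  have hφ := (h.pos x).le
  rcases lt_or_ge x b with hxb | hbx
  · refine (htail (neg_pos.2 hb) ?_).trans (by gcongr; simp)
    exact (neg_le_neg (h.monotone hxb.le)).trans (neg_le_abs _)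
  rcases lt_or_ge a x with hax | hxa
  · exact (htail ha ((h.monotone hax.le).trans (le_abs_self _))).trans (by gcongr; simp)
  · rw [← div_le_iff₀ (h.pos x)]
    exact ((le_abs_self _).trans (hC x ⟨hbx, hxa⟩)).trans (le_max_left _ _)

theorem steinSolution_nonneg (h : IsLogConcaveDensity φ ψ) (z x : ℝ) : 0 ≤ steinSolution φ z x :=
  div_nonneg (mul_nonneg (h.densityCDF_nonneg _) (sub_nonneg.2 (h.densityCDF_le_one _)))
    (h.pos x).le

theorem steinSolution_le (h : IsLogConcaveDensity φ ψ) (z x : ℝ) :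
    steinSolution φ z x ≤ densityCDF φ x * (1 - densityCDF φ x) / φ x := by
  have hφ := (h.pos x).le
  have hF := h.densityCDF_nonneg x
  have hF' := sub_nonneg.2 (h.densityCDF_le_one (max x z))
  unfold steinSolution
  gcongr
  · exact h.monotone_densityCDF (min_le_left _ _)
  · exact h.monotone_densityCDF (le_max_left _ _)

theorem abs_mul_steinSolution_le_one (h : IsLogConcaveDensity φ ψ) (z x : ℝ) :
    |ψ x * steinSolution φ z x| ≤ 1 := by
  rw [abs_mul, abs_of_nonneg (h.steinSolution_nonneg z x)]
  refine (mul_le_mul_of_nonneg_left (h.steinSolution_le z x) (abs_nonneg _)).trans ?_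
  rw [← mul_div_assoc, div_le_one (h.pos x)]
  exact h.abs_mul_densityCDF_mul_one_sub_le x

theorem exists_steinSolution_le (h : IsLogConcaveDensity φ ψ) :
    ∃ C, ∀ z x, steinSolution φ z x ≤ C :=
  h.exists_densityCDF_mul_one_sub_le.imp fun _ hC z x =>
    (h.steinSolution_le z x).trans ((div_le_iff₀ (h.pos x)).2 (hC x))

-- Stein's equation, with the jump of its right-hand side at `z` absorbed into `min x z`.
theorem hasDerivAt_steinSolution_sub (h : IsLogConcaveDensity φ ψ) (z x : ℝ) :
    HasDerivAt (fun x => steinSolution φ z x - min x z + densityCDF φ z * x)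
      (ψ x * steinSolution φ z x) x := by
  have hF := h.hasDerivAt_densityCDF x
  have hφ := (h.pos x).ne'
  rw [← hasDerivWithinAt_univ, ← Iic_union_Ici (a := z)]
  refine HasDerivWithinAt.union ?_ ?_
  · by_cases hx : x ∈ Iic z
    · refine HasDerivWithinAt.congr (f := fun x =>
          densityCDF φ x * (1 - densityCDF φ z) / φ x - x + densityCDF φ z * x) ?_
        (fun y hy => by rw [steinSolution_of_le φ hy, min_eq_left hy])
        (by rw [steinSolution_of_le φ hx, min_eq_left hx])
      refine (((((hF.mul_const _).div (h.hasDerivAt x) hφ).sub (hasDerivAt_id x)).add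
        ((hasDerivAt_id x).const_mul _)).congr_deriv ?_).hasDerivWithinAt
      rw [steinSolution_of_le φ hx]
      field_simp
      ring
    · exact hasDerivWithinAt_iff_hasFDerivWithinAt.2 (.of_notMem_closure (by simpa using hx))
  · by_cases hx : x ∈ Ici z
    · refine HasDerivWithinAt.congr (f := fun x =>
          densityCDF φ z * (1 - densityCDF φ x) / φ x - z + densityCDF φ z * x) ?_
        (fun y hy => by rw [steinSolution_of_ge φ hy, min_eq_right hy])
        (by rw [steinSolution_of_ge φ hx, min_eq_right hx])
      refine ((((((hF.const_sub 1).const_mul _).div (h.hasDerivAt x) hφ).sub_const z).add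
        ((hasDerivAt_id x).const_mul _)).congr_deriv ?_).hasDerivWithinAt
      rw [steinSolution_of_ge φ hx]
      field_simp
      ring
    · exact hasDerivWithinAt_iff_hasFDerivWithinAt.2 (.of_notMem_closure (by simpa using hx))

theorem abs_steinSolution_sub_le (h : IsLogConcaveDensity φ ψ) (z x y : ℝ) :
    |steinSolution φ z x - steinSolution φ z y| ≤ 3 * |x - y| := by
  have hmean := convex_univ.norm_image_sub_le_of_norm_hasDerivWithin_le
    (fun t _ => (h.hasDerivAt_steinSolution_sub z t).hasDerivWithinAt)
    (fun t _ => h.abs_mul_steinSolution_le_one z t) (mem_univ y) (mem_univ x)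
  have hmin : |min x z - min y z| ≤ |x - y| := by
    simpa using abs_min_sub_min_le_max x z y z
  have hF : |densityCDF φ z * (x - y)| ≤ |x - y| := by
    rw [abs_mul, abs_of_nonneg (h.densityCDF_nonneg z)]
    exact mul_le_of_le_one_left (abs_nonneg _) (h.densityCDF_le_one z)
  simp only [Real.norm_eq_abs] at hmean
  rw [abs_le] at *
  constructor <;> linarith

theorem continuous_steinSolution (h : IsLogConcaveDensity φ ψ) (z : ℝ) :
    Continuous (steinSolution φ z) :=
  (LipschitzWith.of_dist_le_mul (K := 3) fun x y =>
    h.abs_steinSolution_sub_le z x y).continuous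

theorem abs_steinSolution_finiteDiff_le (h : IsLogConcaveDensity φ ψ) {C : ℝ}
    (hC : ∀ z x, steinSolution φ z x ≤ C) (z x : ℝ) {δ : ℝ} (hδ : 0 ≤ δ) :
    |steinSolution φ z x - steinSolution φ z (x - δ) - (min x z - min (x - δ) z)
        + δ * densityCDF φ z - δ * (ψ x * steinSolution φ z x)|
      ≤ δ * (C * (ψ x - ψ (x - δ)) + 3 * δ * |ψ x|) := by
  have hderiv (t : ℝ) : HasDerivAt (fun t => steinSolution φ z t - min t z + densityCDF φ z * t
      - ψ x * steinSolution φ z x * t)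
      (ψ t * steinSolution φ z t - ψ x * steinSolution φ z x) t :=
    ((h.hasDerivAt_steinSolution_sub z t).sub ((hasDerivAt_id t).const_mul _)).congr_deriv
      (by ring)
  have hbound (t : ℝ) (ht : t ∈ Icc (x - δ) x) :
      |ψ t * steinSolution φ z t - ψ x * steinSolution φ z x|
        ≤ C * (ψ x - ψ (x - δ)) + 3 * δ * |ψ x| := by
    have hscore : |ψ t - ψ x| * steinSolution φ z t ≤ (ψ x - ψ (x - δ)) * C := by
      have hψ : |ψ t - ψ x| ≤ ψ x - ψ (x - δ) := by
        rw [abs_sub_comm, abs_of_nonneg (sub_nonneg.2 (h.monotone ht.2))]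
        exact sub_le_sub_left (h.monotone ht.1) _
      exact mul_le_mul hψ (hC z t) (h.steinSolution_nonneg z t) ((abs_nonneg _).trans hψ)
    have hsol : |steinSolution φ z t - steinSolution φ z x| ≤ 3 * δ := by
      refine (h.abs_steinSolution_sub_le z t x).trans ?_
      rw [abs_sub_comm, abs_of_nonneg (sub_nonneg.2 ht.2)]
      linarith [ht.1]
    calc |ψ t * steinSolution φ z t - ψ x * steinSolution φ z x|
        = |(ψ t - ψ x) * steinSolution φ z t
            + ψ x * (steinSolution φ z t - steinSolution φ z x)| := by ring_nf
      _ ≤ |ψ t - ψ x| * steinSolution φ z t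
            + |ψ x| * |steinSolution φ z t - steinSolution φ z x| := by
          refine (abs_add_le _ _).trans_eq ?_
          rw [abs_mul, abs_mul, abs_of_nonneg (h.steinSolution_nonneg z t)]
      _ ≤ (ψ x - ψ (x - δ)) * C + |ψ x| * (3 * δ) := by gcongr
      _ = C * (ψ x - ψ (x - δ)) + 3 * δ * |ψ x| := by ring
  have hmean := (convex_Icc (x - δ) x).norm_image_sub_le_of_norm_hasDerivWithin_le
    (fun t _ => (hderiv t).hasDerivWithinAt) hbound (left_mem_Icc.2 (by linarith))
    (right_mem_Icc.2 (by linarith))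
  rw [Real.norm_eq_abs, Real.norm_eq_abs, sub_sub_cancel, abs_of_nonneg hδ, mul_comm _ δ] at hmean
  refine le_of_eq_of_le ?_ hmean
  congr 1
  ring

end IsLogConcaveDensity

end LogConcaveDensity

section QuarticDensity

/-- The probability density proportional to `e^{-b x⁴}`. -/
noncomputable def quarticDensity (b x : ℝ) : ℝ :=
  Real.exp (-b * x ^ 4) / ∫ t : ℝ, Real.exp (-b * t ^ 4)

theorem integrable_exp_neg_mul_pow_four {b : ℝ} (hb : 0 < b) :
    Integrable fun t : ℝ => Real.exp (-b * t ^ 4) := by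
  refine ((integrable_exp_neg_mul_sq (b := 2 * b) (by positivity)).const_mul
    (Real.exp b)).mono' (by fun_prop) (.of_forall fun t => ?_)
  rw [Real.norm_eq_abs, abs_of_pos (Real.exp_pos _), ← Real.exp_add]
  apply Real.exp_le_exp.2
  nlinarith [sq_nonneg (t ^ 2 - 1)]

theorem integral_exp_neg_mul_pow_four_pos {b : ℝ} (hb : 0 < b) :
    0 < ∫ t : ℝ, Real.exp (-b * t ^ 4) :=
  integral_exp_pos (integrable_exp_neg_mul_pow_four hb)

theorem isLogConcaveDensity_quarticDensity {b : ℝ} (hb : 0 < b) :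
    IsLogConcaveDensity (quarticDensity b) fun x => 4 * b * x ^ 3 where
  pos _ := div_pos (Real.exp_pos _) (integral_exp_neg_mul_pow_four_pos hb)
  hasDerivAt x := by
    refine (((hasDerivAt_pow 4 x).const_mul (-b)).exp.div_const _).congr_deriv ?_
    rw [quarticDensity]
    push_cast
    ring
  monotone := (Odd.strictMono_pow (by decide)).monotone.const_mul (by positivity)
  integral_eq_one := by
    simp only [quarticDensity]
    rw [integral_div, div_self (integral_exp_neg_mul_pow_four_pos hb).ne']

theorem densityCDF_quarticDensity (b z : ℝ) : densityCDF (quarticDensity b) z =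
    (∫ t in Set.Iic z, Real.exp (-b * t ^ 4)) / ∫ t : ℝ, Real.exp (-b * t ^ 4) :=
  integral_div _ _

theorem quarticDensity_le {b : ℝ} (hb : 0 < b) (x : ℝ) :
    quarticDensity b x ≤ (∫ t : ℝ, Real.exp (-b * t ^ 4))⁻¹ := by
  rw [quarticDensity, div_eq_mul_inv]
  refine mul_le_of_le_one_left (inv_nonneg.2 (integral_exp_neg_mul_pow_four_pos hb).le) ?_
  exact Real.exp_le_one_iff.2 (mul_nonpos_of_nonpos_of_nonneg (by linarith) (by positivity))

end QuarticDensity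

section KolmogorovBound

open Set
open scoped BoundedContinuousFunction

variable {Ω : Type*} [MeasurableSpace Ω] {μ : Measure Ω} {X u v : Ω → ℝ} {δ : ℝ}

/-- Detailed balance, in integrated form, for a chain whose observable `X` jumps from `X` to
`X + δ` at rate `u` and from `X` to `X - δ` at rate `v`. -/
structure IsDetailedBalance (μ : Measure Ω) (X : Ω → ℝ) (δ : ℝ) (u v : Ω → ℝ) : Prop where
  measurable : Measurable X
  integrable_up : Integrable u μ
  integrable_down : Integrable v μ
  integral_eq : ∀ f : ℝ →ᵇ ℝ, ∫ ω, u ω * f (X ω) ∂μ = ∫ ω, v ω * f (X ω - δ) ∂μ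

theorem integrable_min_sub_min [IsFiniteMeasure μ] (hX : Measurable X) (z : ℝ) :
    Integrable (fun ω => min (X ω) z - min (X ω - δ) z) μ := by
  refine .of_bound (by fun_prop) |δ| (.of_forall fun ω => ?_)
  simpa using abs_min_sub_min_le_max (X ω) z (X ω - δ) z

theorem mul_indicator_le_min_sub_min (hδ : 0 ≤ δ) (x z : ℝ) :
    δ * (Iic z).indicator 1 x ≤ min x z - min (x - δ) z := by
  by_cases hx : x ≤ z
  · rw [indicator_of_mem (Set.mem_Iic.2 hx), min_eq_left hx, min_eq_left (by linarith),
      Pi.one_apply]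
    linarith
  · rw [indicator_of_notMem (by simpa using hx), mul_zero, sub_nonneg]
    gcongr
    linarith

theorem min_sub_min_le_mul_indicator (hδ : 0 ≤ δ) (x z : ℝ) :
    min x z - min (x - δ) z ≤ δ * (Iic (z + δ)).indicator 1 x := by
  by_cases hx : x ≤ z + δ
  · rw [indicator_of_mem (Set.mem_Iic.2 hx), min_eq_left (by linarith : x - δ ≤ z), Pi.one_apply]
    linarith [min_le_left x z]
  · rw [indicator_of_notMem (by simpa using hx), mul_zero, min_eq_right (by linarith),
      min_eq_right (by linarith), sub_self]

theorem integral_indicator_Iic_comp (hX : Measurable X) (z : ℝ) :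
    ∫ ω, (Iic z).indicator (1 : ℝ → ℝ) (X ω) ∂μ = μ.real {ω | X ω ≤ z} :=
  integral_indicator_one (hX measurableSet_Iic)

theorem mul_measureReal_le_integral_min_sub_min [IsFiniteMeasure μ] (hX : Measurable X)
    (hδ : 0 ≤ δ) (z : ℝ) :
    δ * μ.real {ω | X ω ≤ z} ≤ ∫ ω, (min (X ω) z - min (X ω - δ) z) ∂μ := by
  rw [← integral_indicator_Iic_comp hX, ← integral_const_mul]
  refine integral_mono (.const_mul ?_ _) (integrable_min_sub_min hX z) fun ω =>
    mul_indicator_le_min_sub_min hδ (X ω) z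
  exact (integrable_const (1 : ℝ)).indicator (hX measurableSet_Iic)

theorem integral_min_sub_min_le_mul_measureReal [IsFiniteMeasure μ] (hX : Measurable X)
    (hδ : 0 ≤ δ) (z : ℝ) :
    ∫ ω, (min (X ω) z - min (X ω - δ) z) ∂μ ≤ δ * μ.real {ω | X ω ≤ z + δ} := by
  rw [← integral_indicator_Iic_comp hX, ← integral_const_mul]
  refine integral_mono (integrable_min_sub_min hX z) (.const_mul ?_ _) fun ω =>
    min_sub_min_le_mul_indicator hδ (X ω) z
  exact (integrable_const (1 : ℝ)).indicator (hX measurableSet_Iic)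

theorem abs_measureReal_sub_le_of_abs_integral_min_sub_min_sub_le [IsFiniteMeasure μ]
    (hX : Measurable X) (hδ : 0 < δ) {F : ℝ → ℝ} {η κ : ℝ}
    (hη : ∀ z, |(∫ ω, (min (X ω) z - min (X ω - δ) z) ∂μ) - δ * F z| ≤ δ * η)
    (hκ : ∀ z, F z - F (z - δ) ≤ κ) (hκ0 : 0 ≤ κ) (z : ℝ) :
    |μ.real {ω | X ω ≤ z} - F z| ≤ η + κ := by
  have upper : δ * μ.real {ω | X ω ≤ z} ≤ δ * (F z + η) := by
    linarith [mul_measureReal_le_integral_min_sub_min (μ := μ) hX hδ.le z, (abs_le.1 (hη z)).2]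
  have lower : δ * (F (z - δ) - η) ≤ δ * μ.real {ω | X ω ≤ z} := by
    have := integral_min_sub_min_le_mul_measureReal (μ := μ) hX hδ.le (z - δ)
    rw [sub_add_cancel] at this
    linarith [(abs_le.1 (hη (z - δ))).1]
  have upper' := le_of_mul_le_mul_left upper hδ
  have lower' := le_of_mul_le_mul_left lower hδ
  rw [abs_le]
  constructor <;> linarith [hκ z]

variable {φ ψ : ℝ → ℝ} {C : ℝ}

/-- The solution of Stein's equation as a bounded continuous test function. -/
noncomputable def IsLogConcaveDensity.steinTest (h : IsLogConcaveDensity φ ψ)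
    (hC : ∀ z x, steinSolution φ z x ≤ C) (z : ℝ) : ℝ →ᵇ ℝ :=
  .ofNormedAddCommGroup (steinSolution φ z) (h.continuous_steinSolution z) C fun x =>
    (Real.norm_of_nonneg (h.steinSolution_nonneg z x)).trans_le (hC z x)

theorem IsLogConcaveDensity.abs_min_sub_min_sub_flux_le (h : IsLogConcaveDensity φ ψ)
    (hC : ∀ z x, steinSolution φ z x ≤ C) (hδ : 0 ≤ δ) {v₀ : ℝ} (hv₀ : 0 ≤ v₀) (z x a b : ℝ) :
    |v₀ * (min x z - min (x - δ) z - δ * densityCDF φ z)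
        - (a * steinSolution φ z x - b * steinSolution φ z (x - δ))|
      ≤ C * |a - b + v₀ * δ * ψ x| + 3 * δ * |b - v₀|
        + v₀ * δ * (C * (ψ x - ψ (x - δ)) + 3 * δ * |ψ x|) := by
  have hstein := h.abs_steinSolution_finiteDiff_le hC z x hδ
  have hlip : |steinSolution φ z x - steinSolution φ z (x - δ)| ≤ 3 * δ := by
    simpa [abs_of_nonneg hδ] using h.abs_steinSolution_sub_le z x (x - δ)
  have hsol := h.steinSolution_nonneg z x
  have hsol' := hC z x
  set f := steinSolution φ z
  set S := f x - f (x - δ) - (min x z - min (x - δ) z) + δ * densityCDF φ z - δ * (ψ x * f x)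
  calc |v₀ * (min x z - min (x - δ) z - δ * densityCDF φ z) - (a * f x - b * f (x - δ))|
      = |-((a - b + v₀ * δ * ψ x) * f x) - (b - v₀) * (f x - f (x - δ)) - v₀ * S| := by
        congr 1; ring
    _ ≤ |a - b + v₀ * δ * ψ x| * |f x| + |b - v₀| * |f x - f (x - δ)| + v₀ * |S| := by
        refine (abs_sub _ _).trans (add_le_add ((abs_sub _ _).trans_eq ?_) ?_)
        · rw [abs_neg, abs_mul, abs_mul]
        · rw [abs_mul, abs_of_nonneg hv₀]
    _ ≤ |a - b + v₀ * δ * ψ x| * C + |b - v₀| * (3 * δ)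
          + v₀ * (δ * (C * (ψ x - ψ (x - δ)) + 3 * δ * |ψ x|)) := by
        rw [abs_of_nonneg hsol]
        gcongr
    _ = _ := by ring

theorem IsLogConcaveDensity.integrable_mul_steinSolution (h : IsLogConcaveDensity φ ψ)
    (hC : ∀ z x, steinSolution φ z x ≤ C) (hu : Integrable u μ) (hX : Measurable X) (z : ℝ) :
    Integrable (fun ω => u ω * steinSolution φ z (X ω)) μ :=
  hu.mul_bdd ((h.continuous_steinSolution z).measurable.comp hX).aestronglyMeasurable
    (.of_forall fun ω => (h.steinTest hC z).norm_coe_le_norm (X ω))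

theorem IsDetailedBalance.integral_sub_steinSolution_eq_zero (hbal : IsDetailedBalance μ X δ u v)
    (h : IsLogConcaveDensity φ ψ) (hC : ∀ z x, steinSolution φ z x ≤ C) (z : ℝ) :
    ∫ ω, (u ω * steinSolution φ z (X ω) - v ω * steinSolution φ z (X ω - δ)) ∂μ = 0 := by
  rw [integral_sub (h.integrable_mul_steinSolution hC hbal.integrable_up hbal.measurable z)
    (h.integrable_mul_steinSolution hC hbal.integrable_down (hbal.measurable.sub_const δ) z)]
  exact sub_eq_zero.2 (hbal.integral_eq (h.steinTest hC z))

theorem IsDetailedBalance.abs_integral_min_sub_min_sub_le [IsProbabilityMeasure μ]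
    (hbal : IsDetailedBalance μ X δ u v) (h : IsLogConcaveDensity φ ψ)
    (hC : ∀ z x, steinSolution φ z x ≤ C) (hδ : 0 ≤ δ) {v₀ : ℝ} (hv₀ : 0 ≤ v₀)
    (hψ : Integrable (fun ω => ψ (X ω)) μ) (hψδ : Integrable (fun ω => ψ (X ω - δ)) μ) (z : ℝ) :
    v₀ * |(∫ ω, (min (X ω) z - min (X ω - δ) z) ∂μ) - δ * densityCDF φ z|
      ≤ C * (∫ ω, |u ω - v ω + v₀ * δ * ψ (X ω)| ∂μ) + 3 * δ * (∫ ω, |v ω - v₀| ∂μ)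
        + v₀ * δ * ∫ ω, (C * (ψ (X ω) - ψ (X ω - δ)) + 3 * δ * |ψ (X ω)|) ∂μ := by
  have hflux : Integrable
      (fun ω => u ω * steinSolution φ z (X ω) - v ω * steinSolution φ z (X ω - δ)) μ :=
    (h.integrable_mul_steinSolution hC hbal.integrable_up hbal.measurable z).sub
      (h.integrable_mul_steinSolution hC hbal.integrable_down (hbal.measurable.sub_const δ) z)
  have hmin : Integrable (fun ω => min (X ω) z - min (X ω - δ) z - δ * densityCDF φ z) μ :=
    (integrable_min_sub_min hbal.measurable z).sub (integrable_const _)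
  have hbias : Integrable (fun ω => C * |u ω - v ω + v₀ * δ * ψ (X ω)|) μ :=
    ((hbal.integrable_up.sub hbal.integrable_down).add (hψ.const_mul (v₀ * δ))).abs.const_mul C
  have hrate : Integrable (fun ω => 3 * δ * |v ω - v₀|) μ :=
    (hbal.integrable_down.sub (integrable_const v₀)).abs.const_mul (3 * δ)
  have hscore : Integrable
      (fun ω => v₀ * δ * (C * (ψ (X ω) - ψ (X ω - δ)) + 3 * δ * |ψ (X ω)|)) μ :=
    (((hψ.sub hψδ).const_mul C).add (hψ.abs.const_mul (3 * δ))).const_mul (v₀ * δ)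
  calc v₀ * |(∫ ω, (min (X ω) z - min (X ω - δ) z) ∂μ) - δ * densityCDF φ z|
      = |∫ ω, v₀ * (min (X ω) z - min (X ω - δ) z - δ * densityCDF φ z) ∂μ| := by
        rw [integral_const_mul, abs_mul, abs_of_nonneg hv₀,
          integral_sub (integrable_min_sub_min hbal.measurable z) (integrable_const _),
          integral_const, probReal_univ, one_smul]
    _ = |∫ ω, (v₀ * (min (X ω) z - min (X ω - δ) z - δ * densityCDF φ z)
          - (u ω * steinSolution φ z (X ω) - v ω * steinSolution φ z (X ω - δ))) ∂μ| := by
        rw [integral_sub (hmin.const_mul v₀) hflux,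
          hbal.integral_sub_steinSolution_eq_zero h hC, sub_zero]
    _ ≤ ∫ ω, (C * |u ω - v ω + v₀ * δ * ψ (X ω)| + 3 * δ * |v ω - v₀|
          + v₀ * δ * (C * (ψ (X ω) - ψ (X ω - δ)) + 3 * δ * |ψ (X ω)|)) ∂μ :=
        (Real.norm_eq_abs _).symm.trans_le <|
          norm_integral_le_of_norm_le ((hbias.fun_add hrate).fun_add hscore) <|
            .of_forall fun ω => h.abs_min_sub_min_sub_flux_le hC hδ hv₀ z (X ω) (u ω) (v ω)
    _ = _ := by
        rw [integral_add (hbias.fun_add hrate) hscore, integral_add hbias hrate, integral_const_mul,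
          integral_const_mul, integral_const_mul]

theorem IsDetailedBalance.abs_measureReal_sub_densityCDF_le [IsProbabilityMeasure μ]
    (hbal : IsDetailedBalance μ X δ u v) (h : IsLogConcaveDensity φ ψ)
    (hC : ∀ z x, steinSolution φ z x ≤ C) {L : ℝ} (hL : ∀ x, φ x ≤ L) (hδ : 0 < δ) {v₀ : ℝ}
    (hv₀ : 0 < v₀) (hψ : Integrable (fun ω => ψ (X ω)) μ)
    (hψδ : Integrable (fun ω => ψ (X ω - δ)) μ) (z : ℝ) :
    |μ.real {ω | X ω ≤ z} - densityCDF φ z|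
      ≤ C * (∫ ω, |u ω - v ω + v₀ * δ * ψ (X ω)| ∂μ) / (v₀ * δ)
        + 3 * (∫ ω, |v ω - v₀| ∂μ) / v₀
        + (∫ ω, (C * (ψ (X ω) - ψ (X ω - δ)) + 3 * δ * |ψ (X ω)|) ∂μ) + L * δ := by
  refine abs_measureReal_sub_le_of_abs_integral_min_sub_min_sub_le hbal.measurable hδ
    (fun y => ?_) (fun y => ?_) (mul_nonneg ((h.pos 0).le.trans (hL 0)) hδ.le) z
  · refine le_of_mul_le_mul_left ((hbal.abs_integral_min_sub_min_sub_le h hC hδ.le hv₀.le hψ hψδ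
      y).trans_eq ?_) hv₀
    field_simp
  · simpa using h.densityCDF_sub_le hL (sub_le_self y hδ.le)

end KolmogorovBound

section QuarticKolmogorovBound

variable {Ω : Type*} [MeasurableSpace Ω] {μ : Measure Ω} {X u v : Ω → ℝ} {δ : ℝ}

open scoped BoundedContinuousFunction in
theorem IsDetailedBalance.const_mul_sub (hbal : IsDetailedBalance μ X δ u v) (a c : ℝ) :
    IsDetailedBalance μ (fun ω => a * (X ω - c)) (a * δ) u v where
  measurable := (hbal.measurable.sub_const c).const_mul a
  integrable_up := hbal.integrable_up
  integrable_down := hbal.integrable_down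
  integral_eq f := by
    simpa [mul_sub, sub_right_comm] using
      hbal.integral_eq (f.compContinuous ⟨fun x => a * (x - c), by fun_prop⟩)

theorem integrable_pow_of_memLp [IsFiniteMeasure μ] {k n : ℕ} (hkn : k ≤ n)
    (hX : MemLp X n μ) : Integrable (fun ω => X ω ^ k) μ := by
  refine (integrable_norm_iff (hX.aestronglyMeasurable.pow k)).1 ?_
  simpa only [Pi.pow_apply, norm_pow] using
    (hX.mono_exponent (Nat.cast_le.2 hkn)).integrable_norm_pow'

theorem abs_le_one_add_pow_four (x : ℝ) : |x| ≤ 1 + x ^ 4 := by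
  rw [abs_le]
  constructor <;> nlinarith [sq_nonneg (x ^ 2 - 1), sq_nonneg (x - 1), sq_nonneg (x + 1)]

theorem abs_pow_three_le_one_add_pow_four (x : ℝ) : |x ^ 3| ≤ 1 + x ^ 4 := by
  rw [abs_le]
  constructor <;> nlinarith [sq_nonneg (x ^ 2 - 1), sq_nonneg (x - 1), sq_nonneg (x + 1),
    sq_nonneg (x ^ 2 - x), sq_nonneg (x ^ 2 + x)]

theorem pow_three_sub_sub_pow_three_le {A x : ℝ} (hδ : 0 ≤ δ) (hδA : δ ≤ A) :
    x ^ 3 - (x - δ) ^ 3 ≤ δ * ((3 + 3 * A + A ^ 2) * (1 + x ^ 4)) := by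
  have hA := hδ.trans hδA
  have habs := abs_le_one_add_pow_four x
  have hsq : x ^ 2 ≤ 1 + x ^ 4 := by nlinarith [sq_nonneg (x ^ 2 - 1)]
  have hone : 1 ≤ 1 + x ^ 4 := by linarith [pow_nonneg (sq_nonneg x) 2]
  calc x ^ 3 - (x - δ) ^ 3 = δ * (3 * x ^ 2 + 3 * δ * -x + δ ^ 2 * 1) := by ring
    _ ≤ δ * (3 * x ^ 2 + 3 * δ * |x| + δ ^ 2 * 1) := by
      gcongr
      exact neg_le_abs x
    _ ≤ δ * (3 * (1 + x ^ 4) + 3 * A * (1 + x ^ 4) + A ^ 2 * (1 + x ^ 4)) := by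
      gcongr
    _ = _ := by ring

theorem integral_quarticScore_le [IsProbabilityMeasure μ] (hX : MemLp X 4 μ) {A C b : ℝ}
    (hb : 0 ≤ b) (hC : 0 ≤ C) (hδ : 0 ≤ δ) (hδA : δ ≤ A) (hmoment : ∫ ω, X ω ^ 4 ∂μ ≤ A) :
    ∫ ω, (C * (4 * b * X ω ^ 3 - 4 * b * (X ω - δ) ^ 3) + 3 * δ * |4 * b * X ω ^ 3|) ∂μ ≤
      δ * (4 * b * ((3 + 3 * A + A ^ 2) * C + 3) * (1 + A)) := by
  have hA := hδ.trans hδA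
  have hX4 := integrable_pow_of_memLp (le_refl 4) hX
  have hX3 := (integrable_pow_of_memLp (Nat.le_succ 3) hX).const_mul (4 * b)
  have hXδ3 := (integrable_pow_of_memLp (Nat.le_succ 3) (hX.sub (memLp_const δ))).const_mul (4 * b)
  have hpointwise (x : ℝ) :
      C * (4 * b * x ^ 3 - 4 * b * (x - δ) ^ 3) + 3 * δ * |4 * b * x ^ 3| ≤
        δ * (4 * b * ((3 + 3 * A + A ^ 2) * C + 3)) * (1 + x ^ 4) :=
    calc _ = 4 * b * C * (x ^ 3 - (x - δ) ^ 3) + 12 * δ * b * |x ^ 3| := by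
          rw [abs_mul, abs_of_nonneg (by positivity : 0 ≤ 4 * b)]
          ring
      _ ≤ 4 * b * C * (δ * ((3 + 3 * A + A ^ 2) * (1 + x ^ 4))) + 12 * δ * b * (1 + x ^ 4) := by
          gcongr
          · exact pow_three_sub_sub_pow_three_le hδ hδA
          · exact abs_pow_three_le_one_add_pow_four x
      _ = _ := by ring
  calc _ ≤ ∫ ω, δ * (4 * b * ((3 + 3 * A + A ^ 2) * C + 3)) * (1 + X ω ^ 4) ∂μ :=
        integral_mono (((hX3.sub hXδ3).const_mul C).add (hX3.abs.const_mul (3 * δ)))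
          (((integrable_const 1).add hX4).const_mul _) fun ω => hpointwise (X ω)
    _ = δ * (4 * b * ((3 + 3 * A + A ^ 2) * C + 3)) * (1 + ∫ ω, X ω ^ 4 ∂μ) := by
        rw [integral_const_mul, integral_add (integrable_const 1) hX4]
        simp
    _ ≤ δ * (4 * b * ((3 + 3 * A + A ^ 2) * C + 3)) * (1 + A) := by gcongr
    _ = _ := by ring

/-- The constant in the Kolmogorov bound for the density proportional to `exp (-b * x ^ 4)`, where
`C` bounds the solutions of the Stein equation, `v₀` is the limiting jump rate and `A` controls the
step size, the fourth moment, the bias of the drift and the fluctuations of the rate. -/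
noncomputable def quarticSteinConstant (A C b v₀ : ℝ) : ℝ :=
  C * A / v₀ + 3 * A / v₀ + A * (4 * b * ((3 + 3 * A + A ^ 2) * C + 3) * (1 + A)) +
    (∫ t, Real.exp (-b * t ^ 4))⁻¹ * A

theorem IsDetailedBalance.abs_measureReal_sub_densityCDF_quarticDensity_le
    [IsProbabilityMeasure μ] (hbal : IsDetailedBalance μ X δ u v) {A C b v₀ ε : ℝ} (hb : 0 < b)
    (hC : ∀ z x, steinSolution (quarticDensity b) z x ≤ C) (hv₀ : 0 < v₀) (hδ : 0 < δ)
    (hε : ε ≤ 1) (hδε : δ ≤ A * ε) (hX : MemLp X 4 μ) (hmoment : ∫ ω, X ω ^ 4 ∂μ ≤ A)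
    (hbias : ∫ ω, |u ω - v ω + v₀ * δ * (4 * b * X ω ^ 3)| ∂μ ≤ A * ε * δ)
    (hrate : ∫ ω, |v ω - v₀| ∂μ ≤ A * ε) (z : ℝ) :
    |μ.real {ω | X ω ≤ z} - densityCDF (quarticDensity b) z| ≤
      quarticSteinConstant A C b v₀ * ε := by
  have hφ := isLogConcaveDensity_quarticDensity hb
  have hC0 : 0 ≤ C := (hφ.steinSolution_nonneg 0 0).trans (hC 0 0)
  have hA : 0 ≤ A := (integral_nonneg fun ω => by positivity).trans hmoment
  have hδA : δ ≤ A := hδε.trans (mul_le_of_le_one_right hA hε)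
  have hI := integral_exp_neg_mul_pow_four_pos hb
  calc _ ≤ C * (∫ ω, |u ω - v ω + v₀ * δ * (4 * b * X ω ^ 3)| ∂μ) / (v₀ * δ)
          + 3 * (∫ ω, |v ω - v₀| ∂μ) / v₀
          + (∫ ω, (C * (4 * b * X ω ^ 3 - 4 * b * (X ω - δ) ^ 3) + 3 * δ * |4 * b * X ω ^ 3|) ∂μ)
          + (∫ t, Real.exp (-b * t ^ 4))⁻¹ * δ :=
        hbal.abs_measureReal_sub_densityCDF_le hφ hC (quarticDensity_le hb) hδ hv₀
          ((integrable_pow_of_memLp (Nat.le_succ 3) hX).const_mul _)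
          ((integrable_pow_of_memLp (Nat.le_succ 3) (hX.sub (memLp_const δ))).const_mul _) z
    _ ≤ C * (A * ε * δ) / (v₀ * δ) + 3 * (A * ε) / v₀
          + A * ε * (4 * b * ((3 + 3 * A + A ^ 2) * C + 3) * (1 + A))
          + (∫ t, Real.exp (-b * t ^ 4))⁻¹ * (A * ε) := by
        gcongr
        refine (integral_quarticScore_le hX hb.le hC0 hδ.le hδA hmoment).trans ?_
        gcongr
    _ = quarticSteinConstant A C b v₀ * ε := by
        rw [quarticSteinConstant]
        field_simp

end QuarticKolmogorovBound

section Drift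

open Filter Topology

/-- The drift of the monomer density: up to an error of order `1/N`, the difference of the rates
at which dimers are removed and added when the monomer density is `m`. -/
noncomputable def drift (J h m : ℝ) : ℝ :=
  (1 - m) * Real.exp (2 * tauFun J h m) - m ^ 2

/-- The equations expressing that `drift J h` has a triple zero at `m`; the critical parameters
`J_c`, `h_c` and `m_c` are their solution. -/
structure IsCritical (J h m : ℝ) : Prop where
  four_mul_J_mul : 4 * J * (2 * m - 1) = 1
  sq_eq : m ^ 2 = 4 * m - 2
  exp_tauFun : Real.exp (2 * tauFun J h m) = 2 * (1 - m)

/-- The value of `λ_c = -𝑝̃⁽⁴⁾(m_c)`, as a function of the critical parameters. -/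
noncomputable def criticalLambda (J m : ℝ) : ℝ := 8 * J ^ 2 * (2 - m)

theorem isCritical_of_eq {J h m : ℝ} (hJ : J = 1 / (4 * (3 - 2 * √2)))
    (hh : h = Real.log (2 * √2 - 2) / 2 - 1 / 4) (hm : m = 2 - √2) : IsCritical J h m := by
  have hsq : √2 ^ 2 = 2 := Real.sq_sqrt zero_le_two
  have hgt : 1 < √2 := Real.lt_sqrt_of_sq_lt (by norm_num)
  have hJm : 4 * J * (2 * m - 1) = 1 := by
    have : 3 - 2 * √2 ≠ 0 := fun h0 => by nlinarith
    rw [hJ, hm]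
    field_simp
    ring
  refine ⟨hJm, by rw [hm]; linear_combination hsq, ?_⟩
  have htau : 2 * tauFun J h m = Real.log (2 * √2 - 2) := by
    rw [tauFun, hh]
    linear_combination hJm / 2
  rw [htau, Real.exp_log (by linarith), hm]
  ring

theorem exp_two_mul_tauFun_add (J h m y : ℝ) :
    Real.exp (2 * tauFun J h (m + y)) = Real.exp (2 * tauFun J h m) * Real.exp (4 * J * y) := by
  rw [← Real.exp_add, tauFun, tauFun]
  ring_nf

theorem continuous_drift (J h : ℝ) : Continuous (drift J h) := by
  unfold drift tauFun
  fun_prop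

theorem hasDerivAt_tauFun (J h m : ℝ) : HasDerivAt (tauFun J h) (2 * J) m :=
  ((((hasDerivAt_id m).const_mul 2).sub_const 1).mul_const J).add_const h |>.congr_deriv (by ring)

theorem abs_exp_sub_sum_le (t : ℝ) (n : ℕ) :
    |Real.exp t - ∑ i ∈ range n, t ^ i / i.factorial| ≤ |t| ^ n * Real.exp |t| := by
  rw [← Real.norm_eq_abs, ← Real.norm_eq_abs, ← Complex.norm_real, ← Complex.norm_real]
  exact_mod_cast Complex.norm_exp_sub_sum_le_norm_mul_exp t n

namespace IsCritical

variable {J h mc : ℝ}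

theorem one_half_lt (hc : IsCritical J h mc) : 1 / 2 < mc := by
  have hne : 2 * mc - 1 ≠ 0 := right_ne_zero_of_mul_eq_one hc.four_mul_J_mul
  have hge : 0 ≤ 2 * mc - 1 := by linarith [hc.sq_eq, sq_nonneg mc]
  linarith [hge.lt_of_ne' hne]

theorem pos (hc : IsCritical J h mc) : 0 < mc := one_half_pos.trans hc.one_half_lt

theorem lt_one (hc : IsCritical J h mc) : mc < 1 := by
  linarith [hc.exp_tauFun, Real.exp_pos (2 * tauFun J h mc)]

theorem J_pos (hc : IsCritical J h mc) : 0 < J := by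
  have hm : 0 < 2 * mc - 1 := by linarith [hc.one_half_lt]
  exact pos_of_mul_pos_left (by linarith [hc.four_mul_J_mul] : 0 < J * (2 * mc - 1)) hm.le

theorem four_mul_J_mul_sq (hc : IsCritical J h mc) : 4 * J * mc ^ 2 = 2 := by
  linear_combination 4 * J * hc.sq_eq + 2 * hc.four_mul_J_mul

theorem criticalLambda_pos (hc : IsCritical J h mc) : 0 < criticalLambda J mc := by
  have hJ := hc.J_pos
  have hm : 0 < 2 - mc := by linarith [hc.lt_one]
  unfold criticalLambda
  positivity

theorem drift_eq_zero (hc : IsCritical J h mc) : drift J h mc = 0 := by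
  rw [drift, hc.exp_tauFun]
  linear_combination hc.sq_eq

theorem hasDerivAt_rateRatio (hc : IsCritical J h mc) {m : ℝ} (hm : 0 < m) :
    HasDerivAt (fun m => (1 - m) * Real.exp (2 * tauFun J h m) / m ^ 2)
      (-(4 * J * (m - mc) ^ 2 * Real.exp (2 * tauFun J h m) / m ^ 3)) m := by
  have hexp := ((hasDerivAt_tauFun J h m).const_mul 2).exp
  refine ((((hasDerivAt_id m).const_sub 1).mul hexp).div (hasDerivAt_pow 2 m)
    (by positivity)).congr_deriv ?_
  simp only [id, Pi.mul_apply]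
  field_simp
  linear_combination m * hc.four_mul_J_mul_sq - m ^ 2 * hc.four_mul_J_mul

theorem strictAntiOn_rateRatio (hc : IsCritical J h mc) :
    StrictAntiOn (fun m => (1 - m) * Real.exp (2 * tauFun J h m) / m ^ 2) (Set.Ioi 0) := by
  have hanti {s : Set ℝ} (hs : Convex ℝ s) (hpos : ∀ m ∈ s, 0 < m) (hne : mc ∉ interior s) :
      StrictAntiOn (fun m => (1 - m) * Real.exp (2 * tauFun J h m) / m ^ 2) s := by
    refine strictAntiOn_of_hasDerivWithinAt_neg hs
      (fun m hm => (hc.hasDerivAt_rateRatio (hpos m hm)).continuousAt.continuousWithinAt)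
      (fun m hm => (hc.hasDerivAt_rateRatio (hpos m (interior_subset hm))).hasDerivWithinAt)
      fun m hm => ?_
    have hm0 := hpos m (interior_subset hm)
    have hmc : m - mc ≠ 0 := sub_ne_zero.2 fun heq => hne (heq ▸ hm)
    have hJ := hc.J_pos
    rw [neg_lt_zero]
    positivity
  rw [← Set.Ioc_union_Ici_eq_Ioi hc.pos]
  exact (hanti (convex_Ioc 0 mc) (fun m hm => hm.1) (by simp)).union
    (hanti (convex_Ici mc) (fun m hm => hc.pos.trans_le hm) (by simp))
    (isGreatest_Ioc hc.pos) isLeast_Ici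

theorem rateRatio_eq_one (hc : IsCritical J h mc) :
    (1 - mc) * Real.exp (2 * tauFun J h mc) / mc ^ 2 = 1 :=
  (div_eq_one_iff_eq (pow_ne_zero 2 hc.pos.ne')).2 (sub_eq_zero.1 hc.drift_eq_zero)

theorem drift_pos (hc : IsCritical J h mc) {m : ℝ} (hm0 : 0 ≤ m) (hm : m < mc) :
    0 < drift J h m := by
  rcases hm0.eq_or_lt with rfl | hm0
  · simp [drift, Real.exp_pos]
  · have hratio := hc.strictAntiOn_rateRatio hm0 hc.pos hm
    simp only [hc.rateRatio_eq_one] at hratio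
    exact sub_pos.2 ((one_lt_div (by positivity)).1 hratio)

theorem drift_neg (hc : IsCritical J h mc) {m : ℝ} (hm : mc < m) : drift J h m < 0 := by
  have hm0 := hc.pos.trans hm
  have hratio := hc.strictAntiOn_rateRatio hc.pos hm0 hm
  simp only [hc.rateRatio_eq_one] at hratio
  exact sub_neg.2 ((div_lt_one (by positivity)).1 hratio)

theorem sub_mul_drift_neg (hc : IsCritical J h mc) {m : ℝ} (hm0 : 0 ≤ m) (hm : m ≠ mc) :
    (m - mc) * drift J h m < 0 := by
  rcases hm.lt_or_gt with hlt | hgt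
  · exact mul_neg_of_neg_of_pos (sub_neg.2 hlt) (hc.drift_pos hm0 hlt)
  · exact mul_neg_of_pos_of_neg (sub_pos.2 hgt) (hc.drift_neg hgt)

theorem drift_add_eq (hc : IsCritical J h mc) (y : ℝ) :
    drift J h (mc + y) + criticalLambda J mc * mc ^ 2 / 3 * y ^ 3
      = 2 * (1 - mc) * ((1 - mc - y) *
          (Real.exp (4 * J * y) - (1 + 4 * J * y + (4 * J * y) ^ 2 / 2 + (4 * J * y) ^ 3 / 6))
        - (4 * J) ^ 3 / 6 * y ^ 4) := by
  rw [drift, exp_two_mul_tauFun_add, hc.exp_tauFun, criticalLambda]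
  have h1 := hc.four_mul_J_mul
  have h2 := hc.four_mul_J_mul_sq
  have h3 := hc.sq_eq
  have hJ : 4 * J = 7 - 2 * mc := by linear_combination (7 - 2 * mc) * h1 + 16 * J * h3
  linear_combination h3 + y * (h2 + 4 * J * h3) + y ^ 2 * (h1 + 2 * J * h2 + 8 * J ^ 2 * h3)
    + y ^ 3 * (2 * J * h1 + (8 * J ^ 2 / 3 + 2 * J / 3 * (2 - mc)) * h2
      + 32 * J ^ 3 / 3 * h3 - 2 * J / 3 * hJ)

theorem exists_abs_drift_add_le (hc : IsCritical J h mc) : ∃ C, 0 ≤ C ∧ ∀ y, |y| ≤ 1 →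
    |drift J h (mc + y) + criticalLambda J mc * mc ^ 2 / 3 * y ^ 3| ≤ C * y ^ 4 := by
  have hk : 0 < 4 * J := by linarith [hc.J_pos]
  have hm1 : 0 ≤ 1 - mc := sub_nonneg.2 hc.lt_one.le
  generalize hkdef : 4 * J = k at hk
  refine ⟨2 * (1 - mc) * (2 * (k ^ 4 * Real.exp k) + k ^ 3 / 6), by positivity, fun y hy => ?_⟩
  have hfactor : |1 - mc - y| ≤ 2 := by
    rw [abs_le] at hy ⊢
    constructor <;> linarith [hc.pos]
  have hexp : |Real.exp (k * y) - (1 + k * y + (k * y) ^ 2 / 2 + (k * y) ^ 3 / 6)|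
      ≤ k ^ 4 * Real.exp k * y ^ 4 := by
    have htaylor : |Real.exp (k * y) - (1 + k * y + (k * y) ^ 2 / 2 + (k * y) ^ 3 / 6)|
        ≤ |k * y| ^ 4 * Real.exp |k * y| := by
      simpa [sum_range_succ, Nat.factorial] using abs_exp_sub_sum_le (k * y) 4
    refine htaylor.trans ?_
    rw [abs_mul, abs_of_pos hk, mul_pow, Even.pow_abs (by decide), mul_right_comm]
    gcongr
    exact mul_le_of_le_one_right hk.le hy
  rw [hc.drift_add_eq, hkdef, abs_mul, abs_of_nonneg (mul_nonneg zero_le_two hm1),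
    mul_assoc (2 * (1 - mc))]
  refine mul_le_mul_of_nonneg_left ?_ (mul_nonneg zero_le_two hm1)
  calc |(1 - mc - y) * _ - k ^ 3 / 6 * y ^ 4|
      ≤ 2 * (k ^ 4 * Real.exp k * y ^ 4) + k ^ 3 / 6 * y ^ 4 := by
        refine (abs_sub _ _).trans (add_le_add ?_ (abs_of_nonneg (by positivity)).le)
        rw [abs_mul]
        gcongr
    _ = (2 * (k ^ 4 * Real.exp k) + k ^ 3 / 6) * y ^ 4 := by ring

end IsCritical

theorem exists_pos_forall_le_neg_mul_of_isCompact {α : Type*} [TopologicalSpace α] {K : Set α}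
    (hK : IsCompact K) {x₀ : α} {f g : α → ℝ} (hf : ContinuousOn f K) (hg : ContinuousOn g K)
    (hg0 : ∀ x, 0 ≤ g x) (hneg : ∀ x ∈ K, x ≠ x₀ → f x < 0)
    (hloc : ∃ c > 0, ∀ᶠ x in 𝓝[K] x₀, f x ≤ -(c * g x)) :
    ∃ c > 0, ∀ x ∈ K, f x ≤ -(c * g x) := by
  refine hK.induction_on (p := fun s => ∃ c > 0, ∀ x ∈ s, f x ≤ -(c * g x)) ?_ ?_ ?_ ?_
  · exact ⟨1, one_pos, by simp⟩
  · exact fun s t hst ⟨c, hc, ht⟩ => ⟨c, hc, fun x hx => ht x (hst hx)⟩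
  · rintro s t ⟨c, hc, hs⟩ ⟨d, hd, ht⟩
    refine ⟨min c d, lt_min hc hd, ?_⟩
    rintro x (hx | hx)
    · exact (hs x hx).trans (neg_le_neg (mul_le_mul_of_nonneg_right (min_le_left c d) (hg0 x)))
    · exact (ht x hx).trans (neg_le_neg (mul_le_mul_of_nonneg_right (min_le_right c d) (hg0 x)))
  · intro x hx
    by_cases hx₀ : x = x₀
    · obtain ⟨c, hc, hev⟩ := hloc
      exact ⟨_, hx₀ ▸ hev, c, hc, fun y hy => hy⟩
    · have hfx := neg_pos.2 (hneg x hx hx₀)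
      have hgx : 0 < g x + 1 := by linarith [hg0 x]
      have hlt : f x < -(-f x / (g x + 1) * g x) := by
        have : -f x / (g x + 1) * g x < -f x := by
          rw [div_mul_eq_mul_div, div_lt_iff₀ hgx]
          nlinarith
        linarith
      have hev : ∀ᶠ y in 𝓝[K] x, f y < -(-f x / (g x + 1) * g y) :=
        (hf x hx).eventually_lt ((hg x hx).const_mul _).neg hlt
      exact ⟨_, hev, -f x / (g x + 1), div_pos hfx hgx, fun y hy => le_of_lt hy⟩

theorem IsCritical.exists_sub_mul_drift_le {J h mc : ℝ} (hc : IsCritical J h mc) :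
    ∃ c > 0, ∀ m ∈ Set.Icc (0 : ℝ) 1, (m - mc) * drift J h m ≤ -(c * (m - mc) ^ 4) := by
  refine exists_pos_forall_le_neg_mul_of_isCompact isCompact_Icc
    ((continuous_sub_right mc).mul (continuous_drift J h)).continuousOn (by fun_prop)
    (fun m => by positivity) (fun m hm hne => hc.sub_mul_drift_neg hm.1 hne) ?_
  obtain ⟨C, hC0, hC⟩ := hc.exists_abs_drift_add_le
  have hslope : 0 < criticalLambda J mc * mc ^ 2 / 3 :=
    div_pos (mul_pos hc.criticalLambda_pos (pow_pos hc.pos 2)) three_pos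
  set s := criticalLambda J mc * mc ^ 2 / 3
  refine ⟨s / 2, half_pos hslope, mem_nhdsWithin_of_mem_nhds ?_⟩
  filter_upwards [Metric.ball_mem_nhds mc one_pos,
    Metric.ball_mem_nhds mc (show 0 < s / 2 / (C + 1) by positivity)] with m hm hm'
  rw [Metric.mem_ball, Real.dist_eq] at hm hm'
  have htaylor := hC (m - mc) hm.le
  have hsmall : C * |m - mc| ≤ s / 2 := by
    rw [lt_div_iff₀ (by positivity)] at hm'
    linarith [abs_nonneg (m - mc)]
  rw [add_sub_cancel] at htaylor
  have herror : (m - mc) * (drift J h m + s * (m - mc) ^ 3) ≤ s / 2 * (m - mc) ^ 4 :=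
    calc (m - mc) * (drift J h m + s * (m - mc) ^ 3)
        ≤ |m - mc| * (C * (m - mc) ^ 4) := by
          refine (le_abs_self _).trans ?_
          rw [abs_mul]
          gcongr
      _ = C * |m - mc| * (m - mc) ^ 4 := by ring
      _ ≤ s / 2 * (m - mc) ^ 4 := by gcongr
  linarith

end Drift

section Potential

theorem gFun_pos_and_sq_eq (x : ℝ) :
    0 < gFun x ∧ gFun x ^ 2 = Real.exp (2 * x) * (1 - gFun x) := by
  have hexp : Real.exp (4 * x) = Real.exp (2 * x) ^ 2 := by rw [← Real.exp_nat_mul]; ring_nf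
  have hpos := Real.exp_pos (2 * x)
  rw [gFun, hexp]
  have hsq := Real.sq_sqrt (show 0 ≤ Real.exp (2 * x) ^ 2 + 4 * Real.exp (2 * x) by positivity)
  have hlt : Real.exp (2 * x) < √(Real.exp (2 * x) ^ 2 + 4 * Real.exp (2 * x)) :=
    Real.lt_sqrt_of_sq_lt (by linarith)
  exact ⟨by linarith, by linear_combination hsq / 4⟩

theorem gFun_pos (x : ℝ) : 0 < gFun x := (gFun_pos_and_sq_eq x).1

theorem gFun_sq (x : ℝ) : gFun x ^ 2 = Real.exp (2 * x) * (1 - gFun x) := (gFun_pos_and_sq_eq x).2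

theorem gFun_lt_one (x : ℝ) : gFun x < 1 := by
  have hprod : 0 < Real.exp (2 * x) * (1 - gFun x) := gFun_sq x ▸ pow_pos (gFun_pos x) 2
  exact sub_pos.1 (pos_of_mul_pos_right hprod (Real.exp_pos _).le)

theorem continuous_gFun : Continuous gFun := by
  unfold gFun
  fun_prop

theorem half_log_gFun (x : ℝ) : (2 * Real.log (gFun x) - Real.log (1 - gFun x)) / 2 = x := by
  have hone : 1 - gFun x ≠ 0 := (sub_pos.2 (gFun_lt_one x)).ne'
  have hlog := congrArg Real.log (gFun_sq x)
  rw [Real.log_pow, Real.log_mul (Real.exp_ne_zero _) hone, Real.log_exp] at hlog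
  push_cast at hlog
  linarith

/-- The vector field `g(1 - g)/(2 - g)`, in partial fractions, of the autonomous differential
equation `g' = 2 g(1 - g)/(2 - g)` solved by `gFun`. -/
noncomputable def gField (g : ℝ) : ℝ := g + 1 - 2 / (2 - g)

theorem gField_eq {g : ℝ} (hg : g ≠ 2) : gField g = g * (1 - g) / (2 - g) := by
  have : 2 - g ≠ 0 := sub_ne_zero.2 hg.symm
  rw [gField]
  field_simp
  ring

theorem hasDerivAt_two_div_two_sub_pow {g : ℝ} (hg : g ≠ 2) (n : ℕ) :
    HasDerivAt (fun g => 2 / (2 - g) ^ n) (2 * n / (2 - g) ^ (n + 1)) g := by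
  have hne : 2 - g ≠ 0 := sub_ne_zero.2 hg.symm
  refine ((((hasDerivAt_id g).const_sub 2).pow n).fun_inv (pow_ne_zero n hne)
    |>.const_mul 2).congr_deriv ?_
  rcases n with - | n
  · simp
  · simp only [id, Nat.add_sub_cancel, Pi.pow_apply]
    field_simp
    ring

theorem hasDerivAt_gField {g : ℝ} (hg : g ≠ 2) :
    HasDerivAt gField (1 - 2 / (2 - g) ^ 2) g := by
  have hdiv : HasDerivAt (fun g => 2 / (2 - g)) (2 / (2 - g) ^ 2) g := by
    simpa using hasDerivAt_two_div_two_sub_pow hg 1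
  exact ((hasDerivAt_id g).add_const 1).sub hdiv

theorem hasDerivAt_deriv_gField {g : ℝ} (hg : g ≠ 2) :
    HasDerivAt (fun g => 1 - 2 / (2 - g) ^ 2) (-(4 / (2 - g) ^ 3)) g :=
  ((hasDerivAt_two_div_two_sub_pow hg 2).const_sub 1).congr_deriv (by norm_num)

theorem hasDerivAt_gFun (x : ℝ) : HasDerivAt gFun (2 * gField (gFun x)) x := by
  have hg := gFun_pos x
  have hg1 := sub_pos.2 (gFun_lt_one x)
  have hg2 : 0 < 2 - gFun x := by linarith
  have hinv : HasDerivAt (fun g => (2 * Real.log g - Real.log (1 - g)) / 2)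
      (2 * gField (gFun x))⁻¹ (gFun x) := by
    refine ((((Real.hasDerivAt_log hg.ne').const_mul 2).sub
      (((hasDerivAt_id _).const_sub 1).log hg1.ne')).div_const 2).congr_deriv ?_
    rw [gField_eq (by linarith)]
    field_simp
    ring
  refine (hinv.of_local_left_inverse continuous_gFun.continuousAt ?_
    (.of_forall half_log_gFun)).congr_deriv (inv_inv _)
  rw [gField_eq (by linarith)]
  positivity

theorem hasDerivAt_gFun_tauFun (J h m : ℝ) :
    HasDerivAt (fun m => gFun (tauFun J h m)) (4 * J * gField (gFun (tauFun J h m))) m :=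
  ((hasDerivAt_gFun (tauFun J h m)).comp m (hasDerivAt_tauFun J h m)).congr_deriv (by ring)

theorem hasDerivAt_ptilde (J h m : ℝ) :
    HasDerivAt (ptilde J h) (2 * J * (gFun (tauFun J h m) - m)) m := by
  have hg := hasDerivAt_gFun_tauFun J h m
  have hg1 := sub_pos.2 (gFun_lt_one (tauFun J h m))
  have hg2 : 2 - gFun (tauFun J h m) ≠ 0 := by linarith
  refine (((hasDerivAt_pow 2 m).const_mul (-J)).sub
    (((hg.const_sub 1).add ((hg.const_sub 1).log hg1.ne')).div_const 2)).congr_deriv ?_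
  rw [gField_eq (by linarith)]
  field_simp
  ring

theorem drift_eq_mul_sub (J h m : ℝ) :
    drift J h m = (gFun (tauFun J h m) - m) *
      (gFun (tauFun J h m) + m + Real.exp (2 * tauFun J h m)) := by
  rw [drift]
  linear_combination -gFun_sq (tauFun J h m)

theorem sign_gFun_tauFun_sub (J h : ℝ) {m : ℝ} (hm : 0 ≤ m) :
    SignType.sign (gFun (tauFun J h m) - m) = SignType.sign (drift J h m) := by
  have hfactor : 0 < gFun (tauFun J h m) + m + Real.exp (2 * tauFun J h m) :=
    add_pos (add_pos_of_pos_of_nonneg (gFun_pos _) hm) (Real.exp_pos _)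
  rw [drift_eq_mul_sub, sign_mul, sign_pos hfactor, mul_one]

theorem iteratedDeriv_four_of_hasDerivAt {p y F F' F'' : ℝ → ℝ} {a : ℝ}
    (hp : ∀ x, HasDerivAt p (a * (y x - x)) x) (hy : ∀ x, HasDerivAt y (F (y x)) x)
    (hF : ∀ x, HasDerivAt F (F' (y x)) (y x)) (hF' : ∀ x, HasDerivAt F' (F'' (y x)) (y x))
    (x : ℝ) :
    iteratedDeriv 4 p x = a * (F (y x) * (F' (y x) ^ 2 + F (y x) * F'' (y x))) := by
  have hFy (x : ℝ) := (hF x).comp x (hy x)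
  have hF'y (x : ℝ) := (hF' x).comp x (hy x)
  have hderiv₁ : deriv p = fun x => a * (y x - x) := funext fun x => (hp x).deriv
  have hderiv₂ : deriv (fun x => a * (y x - x)) = fun x => a * (F (y x) - 1) :=
    funext fun x => (((hy x).sub (hasDerivAt_id x)).const_mul a).deriv
  have hderiv₃ : deriv (fun x => a * (F (y x) - 1)) = fun x => a * (F' (y x) * F (y x)) :=
    funext fun x => (((hFy x).sub_const 1).const_mul a).deriv
  rw [iteratedDeriv_succ', iteratedDeriv_succ', iteratedDeriv_succ', iteratedDeriv_one,
    hderiv₁, hderiv₂, hderiv₃]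
  refine (((hF'y x).mul (hFy x)).const_mul a).deriv.trans ?_
  simp only [Function.comp_apply]
  ring

theorem iteratedDeriv_four_ptilde (J h m : ℝ) :
    iteratedDeriv 4 (ptilde J h) m = 2 * J * (4 * J) ^ 3 * (gField (gFun (tauFun J h m)) *
      ((1 - 2 / (2 - gFun (tauFun J h m)) ^ 2) ^ 2
        - gField (gFun (tauFun J h m)) * (4 / (2 - gFun (tauFun J h m)) ^ 3))) := by
  have hne (x : ℝ) : gFun (tauFun J h x) ≠ 2 := ((gFun_lt_one _).trans one_lt_two).ne
  rw [iteratedDeriv_four_of_hasDerivAt (F := fun g => 4 * J * gField g)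
    (F' := fun g => 4 * J * (1 - 2 / (2 - g) ^ 2)) (F'' := fun g => 4 * J * -(4 / (2 - g) ^ 3))
    (hasDerivAt_ptilde J h) (hasDerivAt_gFun_tauFun J h)
    (fun x => (hasDerivAt_gField (hne x)).const_mul (4 * J))
    (fun x => (hasDerivAt_deriv_gField (hne x)).const_mul (4 * J))]
  ring

namespace IsCritical

variable {J h mc : ℝ}

theorem gFun_tauFun_eq (hc : IsCritical J h mc) : gFun (tauFun J h mc) = mc := by
  simpa [hc.drift_eq_zero, sub_eq_zero] using sign_gFun_tauFun_sub J h hc.pos.le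

theorem iteratedDeriv_four_ptilde_eq (hc : IsCritical J h mc) :
    iteratedDeriv 4 (ptilde J h) mc = -criticalLambda J mc := by
  have h2 : 2 - mc ≠ 0 := by linarith [hc.lt_one]
  have hsq : (2 - mc) ^ 2 = 2 := by linear_combination hc.sq_eq
  have hfield : gField mc = 2 * mc - 1 := by
    rw [gField, sub_eq_iff_eq_add, ← sub_eq_iff_eq_add', eq_div_iff h2]
    linear_combination hc.sq_eq
  have hcube : 4 / (2 - mc) ^ 3 = 2 * (2 - mc) / 2 := by
    rw [div_eq_div_iff (pow_ne_zero 3 h2) two_ne_zero]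
    linear_combination (-4 - 2 * (2 - mc) ^ 2) * hsq
  rw [iteratedDeriv_four_ptilde, hc.gFun_tauFun_eq, hsq, hfield, hcube, criticalLambda]
  linear_combination (-8 * J ^ 2 * (2 - mc)) * (4 * J * (2 * mc - 1) + 1) * hc.four_mul_J_mul

theorem ptilde_lt (hc : IsCritical J h mc) {m : ℝ} (hm : 0 ≤ m) (hne : m ≠ mc) :
    ptilde J h m < ptilde J h mc := by
  have hcont : Continuous (ptilde J h) :=
    continuous_iff_continuousAt.2 fun x => (hasDerivAt_ptilde J h x).continuousAt
  have hJ : 0 < 2 * J := mul_pos two_pos hc.J_pos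
  rcases hne.lt_or_gt with hlt | hgt
  · refine strictMonoOn_of_hasDerivWithinAt_pos (convex_Icc m mc) hcont.continuousOn
      (fun x _ => (hasDerivAt_ptilde J h x).hasDerivWithinAt) (fun x hx => ?_)
      (Set.left_mem_Icc.2 hlt.le) (Set.right_mem_Icc.2 hlt.le) hlt
    rw [interior_Icc] at hx
    have hx0 := hm.trans hx.1.le
    have hsign := sign_gFun_tauFun_sub J h hx0
    rw [sign_pos (hc.drift_pos hx0 hx.2), sign_eq_one_iff] at hsign
    exact mul_pos hJ hsign
  · refine strictAntiOn_of_hasDerivWithinAt_neg (convex_Icc mc m) hcont.continuousOn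
      (fun x _ => (hasDerivAt_ptilde J h x).hasDerivWithinAt) (fun x hx => ?_)
      (Set.left_mem_Icc.2 hgt.le) (Set.right_mem_Icc.2 hgt.le) hgt
    rw [interior_Icc] at hx
    have hsign := sign_gFun_tauFun_sub J h (hc.pos.trans hx.1).le
    rw [sign_neg (hc.drift_neg hx.1), sign_eq_neg_one_iff] at hsign
    exact mul_neg_of_pos_of_neg hJ hsign

end IsCritical

end Potential

section Dimer

variable {N : ℕ}

theorem mem_monomers {D : Dimer N} {i : Fin N} : i ∈ monomers D ↔ D.1 i = i := by
  simp [monomers]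

theorem card_monomers_le (D : Dimer N) : #(monomers D) ≤ N :=
  (card_le_univ _).trans (Fintype.card_fin N).le

/-- The dimer configuration `D` with the dimer covering the vertex `i`, if any, removed. -/
def Dimer.unmatch (D : Dimer N) (i : Fin N) : Dimer N :=
  ⟨fun x => if x = i ∨ x = D.1 i then x else D.1 x, fun x => by grind [D.2 x, D.2 i]⟩

/-- The dimer configuration `D` with the two monomers `i` and `j` joined by a dimer. -/
def Dimer.join (D : Dimer N) (i j : Fin N) (hi : D.1 i = i) (hj : D.1 j = j) : Dimer N :=
  ⟨fun x => if x = i then j else if x = j then i else D.1 x, fun x => by grind [D.2 x]⟩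

theorem Dimer.unmatch_join (D : Dimer N) {i j : Fin N} (hi : D.1 i = i) (hj : D.1 j = j) :
    (D.join i j hi hj).unmatch i = D :=
  Subtype.ext <| funext fun x => by
    simp only [unmatch, join]
    grind

theorem Dimer.join_unmatch (D : Dimer N) (i : Fin N) :
    (D.unmatch i).join i (D.1 i) (by simp [unmatch]) (by simp [unmatch]) = D :=
  Subtype.ext <| funext fun x => by
    simp only [unmatch, join]
    grind [D.2 i]

theorem monomers_unmatch (D : Dimer N) (i : Fin N) :
    monomers (D.unmatch i) = insert i (insert (D.1 i) (monomers D)) := by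
  ext x
  simp only [mem_monomers, Finset.mem_insert, Dimer.unmatch]
  grind

theorem card_monomers_unmatch (D : Dimer N) {i : Fin N} (hi : D.1 i ≠ i) :
    #(monomers (D.unmatch i)) = #(monomers D) + 2 := by
  rw [monomers_unmatch, card_insert_of_notMem, card_insert_of_notMem]
  · rwa [mem_monomers, D.2 i, eq_comm]
  · simp [mem_monomers, hi, hi.symm]

theorem mDim_unmatch (D : Dimer N) {i : Fin N} (hi : D.1 i ≠ i) :
    mDim (D.unmatch i) = mDim D + 2 / N := by
  rw [mDim, card_monomers_unmatch D hi, mDim]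
  push_cast
  ring

theorem sum_sum_compl_monomers_unmatch {M : Type*} [AddCommMonoid M] (F : Dimer N → M) :
    ∑ D, ∑ i ∈ (monomers D)ᶜ, F (D.unmatch i) = ∑ D, #(monomers D).offDiag • F D := by
  have hconst (D : Dimer N) : #(monomers D).offDiag • F D = ∑ _p ∈ (monomers D).offDiag, F D :=
    (sum_const _).symm
  have hoff {D : Dimer N} {p : Fin N × Fin N} :
      p ∈ (monomers D).offDiag ↔ D.1 p.1 = p.1 ∧ D.1 p.2 = p.2 ∧ p.1 ≠ p.2 := by
    simp only [mem_offDiag, mem_monomers]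
  simp only [hconst, sum_sigma']
  refine sum_bij' (fun a _ => ⟨a.1.unmatch a.2, (a.2, a.1.1 a.2)⟩)
    (fun b hb => ⟨b.1.join b.2.1 b.2.2 (hoff.1 (mem_sigma.1 hb).2).1
      (hoff.1 (mem_sigma.1 hb).2).2.1, b.2.1⟩) ?_ ?_ ?_ ?_ fun _ _ => rfl
  · rintro ⟨D, i⟩ ha
    simp only [mem_sigma, mem_univ, mem_compl, mem_monomers, true_and] at ha
    simp only [mem_sigma, mem_univ, hoff, true_and, Dimer.unmatch]
    grind
  · rintro ⟨D, i, j⟩ hb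
    simp only [mem_sigma, mem_univ, hoff, true_and] at hb
    simp only [mem_sigma, mem_univ, mem_compl, mem_monomers, true_and, Dimer.join]
    grind
  · exact fun a _ => Sigma.ext (Dimer.join_unmatch _ _) HEq.rfl
  · intro b hb
    have hp := hoff.1 (mem_sigma.1 hb).2
    exact Sigma.ext (Dimer.unmatch_join _ hp.1 hp.2.1) (heq_of_eq (by simp [Dimer.join]))

theorem wDim_unmatch (J h : ℝ) (D : Dimer N) {i : Fin N} (hi : D.1 i ≠ i) :
    wDim N J h (D.unmatch i) =
      N * Real.exp (2 * tauFun J h (mDim D)) * Real.exp (4 * J / N) * wDim N J h D := by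
  have hN : (0 : ℝ) < N := Nat.cast_pos.2 i.pos
  have hexponent : N * (J * (mDim D + 2 / N) ^ 2 + bIMD N J h * (mDim D + 2 / N)) =
      Real.log N + 2 * tauFun J h (mDim D) + 4 * J / N +
        N * (J * mDim D ^ 2 + bIMD N J h * mDim D) := by
    rw [bIMD, tauFun]
    field_simp
    ring
  rw [wDim, wDim, mDim_unmatch D hi, hexponent, Real.exp_add, Real.exp_add, Real.exp_add,
    Real.exp_log hN]

theorem mDim_mem_Icc (D : Dimer N) : mDim D ∈ Set.Icc (0 : ℝ) 1 :=
  ⟨div_nonneg (Nat.cast_nonneg _) (Nat.cast_nonneg _), div_le_one_of_le₀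
    (Nat.cast_le.2 (card_monomers_le D)) (Nat.cast_nonneg _)⟩

/-- The rate at which a dimer is removed when the monomer density is `m`, up to a time change: the
fraction of covered vertices times the weight ratio `wDim (D.unmatch i) / wDim D`, over `N`. -/
noncomputable def gainRate (N : ℕ) (J h m : ℝ) : ℝ :=
  (1 - m) * Real.exp (2 * tauFun J h m) * Real.exp (4 * J / N)

/-- The rate at which two monomers are joined by a dimer when the monomer density is `m`, in the
time scale of `gainRate`: the number of ordered pairs of monomers over `N ^ 2`. -/
noncomputable def lossRate (N : ℕ) (m : ℝ) : ℝ := m * (m - 1 / N)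

theorem card_compl_monomers (hN : N ≠ 0) (D : Dimer N) :
    (#(monomers D)ᶜ : ℝ) = N * (1 - mDim D) := by
  rw [card_compl, Fintype.card_fin, Nat.cast_sub (card_monomers_le D), mDim]
  field_simp

theorem card_offDiag_monomers (hN : N ≠ 0) (D : Dimer N) :
    (#(monomers D).offDiag : ℝ) = N ^ 2 * lossRate N (mDim D) := by
  rw [offDiag_card, Nat.cast_sub (Nat.le_mul_self _), Nat.cast_mul, mDim, lossRate]
  field_simp

theorem sum_wDim_mul_gainRate (hN : N ≠ 0) (J h : ℝ) (f : ℝ → ℝ) :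
    ∑ D : Dimer N, wDim N J h D * (gainRate N J h (mDim D) * f (mDim D)) =
      ∑ D : Dimer N, wDim N J h D * (lossRate N (mDim D) * f (mDim D - 2 / N)) := by
  have hsq : (N : ℝ) ^ 2 ≠ 0 := pow_ne_zero 2 (Nat.cast_ne_zero.2 hN)
  have hunmatch (D : Dimer N) :
      ∑ i ∈ (monomers D)ᶜ, wDim N J h (D.unmatch i) * f (mDim (D.unmatch i) - 2 / N) =
        N ^ 2 * (wDim N J h D * (gainRate N J h (mDim D) * f (mDim D))) := by
    have hterm (i : Fin N) (hi : i ∈ (monomers D)ᶜ) :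
        wDim N J h (D.unmatch i) * f (mDim (D.unmatch i) - 2 / N) =
          N * Real.exp (2 * tauFun J h (mDim D)) * Real.exp (4 * J / N) * wDim N J h D *
            f (mDim D) := by
      rw [mem_compl, mem_monomers] at hi
      rw [wDim_unmatch J h D hi, mDim_unmatch D hi, add_sub_cancel_right]
    rw [sum_congr rfl hterm, sum_const, nsmul_eq_mul, card_compl_monomers hN, gainRate]
    ring
  have hsum := sum_sum_compl_monomers_unmatch fun D : Dimer N =>
    wDim N J h D * f (mDim D - 2 / N)
  simp only [hunmatch, nsmul_eq_mul, card_offDiag_monomers hN, ← mul_sum] at hsum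
  refine mul_left_cancel₀ hsq (hsum.trans ?_)
  rw [mul_sum]
  exact sum_congr rfl fun D _ => by ring

end Dimer

section Gibbs

variable {N : ℕ} {J h : ℝ}

theorem sum_wDim_pos (N : ℕ) (J h : ℝ) : 0 < ∑ D : Dimer N, wDim N J h D :=
  sum_pos (fun _ _ => Real.exp_pos _) ⟨⟨id, fun _ => rfl⟩, mem_univ _⟩

theorem wDim_div_sum_nonneg (D : Dimer N) : 0 ≤ wDim N J h D / ∑ D : Dimer N, wDim N J h D :=
  div_nonneg (Real.exp_pos _).le (sum_wDim_pos N J h).le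

/-- The IMD Gibbs measure, as a measure on the finite space of dimer configurations. -/
noncomputable def gibbsMeasure (N : ℕ) (J h : ℝ) : Measure (Dimer N) :=
  (PMF.ofFintype (fun D => ENNReal.ofReal (wDim N J h D / ∑ D : Dimer N, wDim N J h D)) <| by
    rw [← ENNReal.ofReal_sum_of_nonneg fun D _ => wDim_div_sum_nonneg D, ← sum_div,
      div_self (sum_wDim_pos N J h).ne', ENNReal.ofReal_one]).toMeasure

instance (N : ℕ) (J h : ℝ) : IsProbabilityMeasure (gibbsMeasure N J h) :=
  PMF.toMeasure.isProbabilityMeasure _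

theorem integral_gibbsMeasure (f : Dimer N → ℝ) :
    ∫ D, f D ∂gibbsMeasure N J h = (∑ D, wDim N J h D * f D) / ∑ D, wDim N J h D := by
  rw [gibbsMeasure, PMF.integral_eq_sum, sum_div]
  refine sum_congr rfl fun D _ => ?_
  rw [PMF.ofFintype_apply, smul_eq_mul, ENNReal.toReal_ofReal (wDim_div_sum_nonneg D),
    div_mul_eq_mul_div]

theorem gibbsMeasure_real_setOf (A : Dimer N → Prop) :
    (gibbsMeasure N J h).real {D | A D} = probDim N J h A := by
  rw [← integral_indicator_one (Set.toFinite _).measurableSet, integral_gibbsMeasure, probDim]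
  refine congrArg (· / _) (sum_congr rfl fun D _ => ?_)
  rw [← Set.indicator_mul_right]
  simp

theorem integral_gainRate_mul (hN : N ≠ 0) (f : ℝ → ℝ) :
    ∫ D, gainRate N J h (mDim D) * f (mDim D) ∂gibbsMeasure N J h =
      ∫ D, lossRate N (mDim D) * f (mDim D - 2 / N) ∂gibbsMeasure N J h := by
  rw [integral_gibbsMeasure, integral_gibbsMeasure, sum_wDim_mul_gainRate hN]

theorem isDetailedBalance_mDim (hN : N ≠ 0) :
    IsDetailedBalance (gibbsMeasure N J h) mDim (2 / N) (fun D => gainRate N J h (mDim D))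
      fun D => lossRate N (mDim D) :=
  ⟨.of_discrete, .of_finite, .of_finite, fun f => integral_gainRate_mul hN f⟩

theorem tauFun_le {m : ℝ} (hm : m ∈ Set.Icc (0 : ℝ) 1) : tauFun J h m ≤ |J| + h := by
  have habs : |(2 * m - 1) * J| ≤ |J| := by
    rw [abs_mul]
    refine mul_le_of_le_one_left (abs_nonneg J) (abs_le.2 ?_)
    constructor <;> linarith [hm.1, hm.2]
  rw [tauFun]
  linarith [le_abs_self ((2 * m - 1) * J)]

theorem exists_abs_gainRate_sub_lossRate_sub_drift_le (J h : ℝ) :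
    ∃ R, 0 ≤ R ∧ ∀ N : ℕ, 1 ≤ N → ∀ m ∈ Set.Icc (0 : ℝ) 1,
      |gainRate N J h m - lossRate N m - drift J h m| ≤ R / N := by
  refine ⟨Real.exp (2 * (|J| + h)) * (|4 * J| * Real.exp |4 * J|) + 1, by positivity,
    fun N hN m hm => ?_⟩
  have hN1 : (1 : ℝ) ≤ N := Nat.one_le_cast.2 hN
  have hexp : |Real.exp (4 * J / N) - 1| ≤ |4 * J| * Real.exp |4 * J| / N :=
    calc |Real.exp (4 * J / N) - 1| ≤ |4 * J| / N * Real.exp (|4 * J| / N) := by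
          simpa [abs_div] using abs_exp_sub_sum_le (4 * J / N) 1
      _ ≤ |4 * J| / N * Real.exp |4 * J| := by
          gcongr
          exact div_le_self (abs_nonneg _) hN1
      _ = |4 * J| * Real.exp |4 * J| / N := by ring
  calc |gainRate N J h m - lossRate N m - drift J h m|
      = |(1 - m) * (Real.exp (2 * tauFun J h m) * (Real.exp (4 * J / N) - 1)) + m * (1 / N)| := by
        rw [gainRate, lossRate, drift]
        ring_nf
    _ ≤ 1 * (Real.exp (2 * (|J| + h)) * (|4 * J| * Real.exp |4 * J| / N)) + 1 * (1 / N) := by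
        refine (abs_add_le _ _).trans ?_
        rw [abs_mul, abs_mul, abs_mul, abs_of_nonneg (sub_nonneg.2 hm.2), abs_of_nonneg hm.1,
          abs_of_pos (Real.exp_pos _), abs_of_nonneg (by positivity : (0 : ℝ) ≤ 1 / N)]
        gcongr
        · linarith [hm.1]
        · exact tauFun_le hm
        · exact hm.2
    _ = _ := by ring

end Gibbs

section CriticalFluctuations

theorem lossRate_le_one (N : ℕ) {m : ℝ} (hm : m ∈ Set.Icc (0 : ℝ) 1) : lossRate N m ≤ 1 :=
  calc m * (m - 1 / N) ≤ m * m := by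
        gcongr
        · exact hm.1
        · exact sub_le_self m (by positivity)
    _ ≤ 1 := mul_le_one₀ hm.2 hm.1 hm.2

namespace IsCritical

variable {J h mc : ℝ}

theorem abs_sub_le_one (hc : IsCritical J h mc) {m : ℝ} (hm : m ∈ Set.Icc (0 : ℝ) 1) :
    |m - mc| ≤ 1 :=
  abs_sub_le_of_le_of_le hm.1 hm.2 hc.pos.le hc.lt_one.le |>.trans_eq (sub_zero 1)

theorem exists_integral_sub_pow_four_le (hc : IsCritical J h mc) :
    ∃ M : ℝ, 0 ≤ M ∧ ∀ N : ℕ, 1 ≤ N → ∫ D, (mDim D - mc) ^ 4 ∂gibbsMeasure N J h ≤ M / N := by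
  obtain ⟨c, hc0, hdrift⟩ := hc.exists_sub_mul_drift_le
  obtain ⟨R, hR0, hR⟩ := exists_abs_gainRate_sub_lossRate_sub_drift_le J h
  refine ⟨(R + 2) / c, by positivity, fun N hN => ?_⟩
  have hbalance : ∫ D, (gainRate N J h (mDim D) * (mDim D - mc)
      - lossRate N (mDim D) * (mDim D - 2 / N - mc)) ∂gibbsMeasure N J h = 0 := by
    rw [integral_sub .of_finite .of_finite, sub_eq_zero]
    exact integral_gainRate_mul (Nat.one_le_iff_ne_zero.1 hN) (· - mc)
  have hpointwise (D : Dimer N) : gainRate N J h (mDim D) * (mDim D - mc)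
      - lossRate N (mDim D) * (mDim D - 2 / N - mc) ≤ (R + 2) / N - c * (mDim D - mc) ^ 4 := by
    have hm := mDim_mem_Icc D
    generalize mDim D = m at hm
    have herror : (gainRate N J h m - lossRate N m - drift J h m) * (m - mc) ≤ R / N * 1 := by
      refine (le_abs_self _).trans ?_
      rw [abs_mul]
      exact mul_le_mul (hR N hN m hm) (hc.abs_sub_le_one hm) (abs_nonneg _) (by positivity)
    have hjump : lossRate N m * (2 / N) ≤ 1 * (2 / N) := by
      gcongr
      exact lossRate_le_one N hm
    rw [add_div]
    linarith [hdrift m hm]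
  have hintegral := integral_mono (μ := gibbsMeasure N J h) .of_finite .of_finite hpointwise
  rw [hbalance, integral_sub .of_finite .of_finite, integral_const_mul, integral_const,
    probReal_univ, one_smul, sub_nonneg] at hintegral
  rwa [div_right_comm, le_div_iff₀' hc0]

theorem exists_integral_abs_gainRate_sub_lossRate_add_le (hc : IsCritical J h mc) :
    ∃ K : ℝ, 0 ≤ K ∧ ∀ N : ℕ, 1 ≤ N → ∫ D, |gainRate N J h (mDim D) - lossRate N (mDim D)
      + criticalLambda J mc * mc ^ 2 / 3 * (mDim D - mc) ^ 3| ∂gibbsMeasure N J h ≤ K / N := by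
  obtain ⟨R, hR0, hR⟩ := exists_abs_gainRate_sub_lossRate_sub_drift_le J h
  obtain ⟨C, hC0, hC⟩ := hc.exists_abs_drift_add_le
  obtain ⟨M, hM0, hM⟩ := hc.exists_integral_sub_pow_four_le
  refine ⟨R + C * M, by positivity, fun N hN => ?_⟩
  have hpointwise (D : Dimer N) : |gainRate N J h (mDim D) - lossRate N (mDim D)
      + criticalLambda J mc * mc ^ 2 / 3 * (mDim D - mc) ^ 3|
        ≤ R / N + C * (mDim D - mc) ^ 4 := by
    have hm := mDim_mem_Icc D
    have htaylor := hC _ (hc.abs_sub_le_one hm)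
    rw [add_sub_cancel] at htaylor
    refine (le_of_eq ?_).trans ((abs_add_le _ _).trans (add_le_add (hR N hN _ hm) htaylor))
    ring_nf
  calc _ ≤ ∫ D, (R / N + C * (mDim D - mc) ^ 4) ∂gibbsMeasure N J h :=
        integral_mono .of_finite .of_finite hpointwise
    _ = R / N + C * ∫ D, (mDim D - mc) ^ 4 ∂gibbsMeasure N J h := by
        rw [integral_add .of_finite .of_finite, integral_const_mul, integral_const, probReal_univ,
          one_smul]
    _ ≤ R / N + C * (M / N) := by
        gcongr
        exact hM N hN
    _ = (R + C * M) / N := by ring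

theorem integral_abs_lossRate_sub_le (hc : IsCritical J h mc) {N : ℕ} {s : ℝ} (hs : 1 ≤ s)
    (hsN : s ^ 4 = N) : ∫ D, |lossRate N (mDim D) - mc ^ 2| ∂gibbsMeasure N J h
      ≤ (3 + 2 * ∫ D, (s * (mDim D - mc)) ^ 4 ∂gibbsMeasure N J h) * s⁻¹ := by
  have hs0 : 0 < s := one_pos.trans_le hs
  have hpointwise (D : Dimer N) : |lossRate N (mDim D) - mc ^ 2|
      ≤ (3 + 2 * (s * (mDim D - mc)) ^ 4) * s⁻¹ := by
    have hm := mDim_mem_Icc D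
    generalize mDim D = m at hm
    have hN : (1 : ℝ) / N ≤ s⁻¹ := by
      rw [← hsN, one_div]
      exact inv_anti₀ hs0 (le_self_pow₀ hs four_ne_zero)
    calc |lossRate N m - mc ^ 2| = |s⁻¹ * (s * (m - mc)) * (m + mc) - m * (1 / N)| := by
          rw [inv_mul_cancel_left₀ hs0.ne', lossRate]
          ring_nf
      _ ≤ s⁻¹ * (1 + (s * (m - mc)) ^ 4) * 2 + 1 * s⁻¹ := by
          refine (abs_sub _ _).trans ?_
          rw [abs_mul, abs_mul, abs_mul m, abs_of_pos (inv_pos.2 hs0), abs_of_nonneg hm.1,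
            abs_of_nonneg (add_nonneg hm.1 hc.pos.le),
            abs_of_nonneg (by positivity : (0 : ℝ) ≤ 1 / N)]
          gcongr
          · exact add_nonneg hm.1 hc.pos.le
          · exact abs_le_one_add_pow_four _
          · linarith [hm.2, hc.lt_one]
          · exact hm.2
      _ = _ := by ring
  refine (integral_mono .of_finite .of_finite hpointwise).trans_eq ?_
  rw [integral_mul_const, integral_add .of_finite .of_finite, integral_const_mul, integral_const,
    probReal_univ, one_smul]

theorem exists_abs_measureReal_sub_densityCDF_le (hc : IsCritical J h mc) :
    ∃ K : ℝ, ∀ (N : ℕ) (s : ℝ), 1 ≤ s → s ^ 4 = N → ∀ z,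
      |(gibbsMeasure N J h).real {D | s * (mDim D - mc) ≤ z}
        - densityCDF (quarticDensity (criticalLambda J mc / 24)) z| ≤ K * s⁻¹ := by
  have hb : 0 < criticalLambda J mc / 24 := div_pos hc.criticalLambda_pos (by norm_num)
  obtain ⟨M, hM0, hM⟩ := hc.exists_integral_sub_pow_four_le
  obtain ⟨K, hK0, hK⟩ := hc.exists_integral_abs_gainRate_sub_lossRate_add_le
  obtain ⟨C, hC⟩ := (isLogConcaveDensity_quarticDensity hb).exists_steinSolution_le
  let A : ℝ := K + 2 * M + 3
  refine ⟨quarticSteinConstant A C (criticalLambda J mc / 24) (mc ^ 2), fun N s hs hsN z => ?_⟩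
  have hs0 : 0 < s := one_pos.trans_le hs
  have hN0 : (0 : ℝ) < N := hsN ▸ pow_pos hs0 4
  have hN : N ≠ 0 := Nat.cast_pos.1 hN0 |>.ne'
  have hmoment : ∫ D, (s * (mDim D - mc)) ^ 4 ∂gibbsMeasure N J h ≤ M := by
    simp only [mul_pow]
    rw [integral_const_mul, hsN, ← le_div_iff₀' hN0]
    exact hM N (Nat.one_le_iff_ne_zero.2 hN)
  have hstep : s * (2 / N) ≤ A * s⁻¹ :=
    calc s * (2 / N) = 2 / s ^ 2 * s⁻¹ := by
          rw [← hsN]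
          field_simp
      _ ≤ A * s⁻¹ := by
          gcongr
          exact (div_le_self zero_le_two (one_le_pow₀ hs)).trans (by linarith)
  have hscale (y : ℝ) : mc ^ 2 * (s * (2 / N)) * (4 * (criticalLambda J mc / 24) * (s * y) ^ 3)
      = criticalLambda J mc * mc ^ 2 / 3 * y ^ 3 := by
    rw [← hsN]
    field_simp
    ring
  refine (isDetailedBalance_mDim hN).const_mul_sub s mc
    |>.abs_measureReal_sub_densityCDF_quarticDensity_le (A := A) hb hC
      (pow_pos hc.pos 2) (by positivity) (inv_le_one_of_one_le₀ hs) hstep .of_discrete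
      (hmoment.trans (by linarith)) ?_ ?_ z
  · simp only [hscale]
    calc _ ≤ K / N := hK N (Nat.one_le_iff_ne_zero.2 hN)
      _ ≤ A * 2 / N := by
          gcongr
          linarith
      _ = A * s⁻¹ * (s * (2 / N)) := by field_simp
  · refine (hc.integral_abs_lossRate_sub_le hs hsN).trans ?_
    gcongr
    linarith

theorem exists_abs_probDim_sub_densityCDF_le (hc : IsCritical J h mc) :
    ∃ K : ℝ, ∀ N : ℕ, 1 ≤ N → ∀ z : ℝ,
      |probDim N J h (fun D => (((monomers D).card : ℝ) - N * mc) / (N : ℝ) ^ ((3 : ℝ) / 4) ≤ z)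
        - densityCDF (quarticDensity (criticalLambda J mc / 24)) z| ≤
          K / (N : ℝ) ^ ((1 : ℝ) / 4) := by
  obtain ⟨K, hK⟩ := hc.exists_abs_measureReal_sub_densityCDF_le
  refine ⟨K, fun N hN z => ?_⟩
  generalize hs : (N : ℝ) ^ ((1 : ℝ) / 4) = s
  have hs1 : 1 ≤ s := hs ▸ Real.one_le_rpow (Nat.one_le_cast.2 hN) (by norm_num)
  have hs4 : s ^ 4 = N := by
    rw [← hs, ← Real.rpow_natCast, ← Real.rpow_mul N.cast_nonneg]
    norm_num
  have hs3 : (N : ℝ) ^ ((3 : ℝ) / 4) = s ^ 3 := by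
    rw [← hs, ← Real.rpow_natCast, ← Real.rpow_mul N.cast_nonneg]
    norm_num
  have hrescale (D : Dimer N) : (#(monomers D) - N * mc) / s ^ 3 = s * (mDim D - mc) := by
    have hs0 : s ≠ 0 := (one_pos.trans_le hs1).ne'
    rw [mDim, ← hs4]
    field_simp
  simp only [hs3, hrescale]
  rw [← gibbsMeasure_real_setOf, div_eq_mul_inv]
  exact hK N s hs1 hs4 z

end IsCritical

end CriticalFluctuations

/-- At the critical point `(J_c, h_c)`, the unique maximizer of `𝑝̃`
is `m_c = 2 - √2`, `λ_c = -𝑝̃⁽⁴⁾(m_c) > 0`, and `(|𝓜(D)| - N m_c)/N^{3/4}` is within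
Kolmogorov distance `K/N^{1/4}` of the law with density `c e^{-λ_c z⁴/24}`. -/
theorem stmt1 (J h mc : ℝ)
    (hJ : J = 1 / (4 * (3 - 2 * Real.sqrt 2)))
    (hh : h = Real.log (2 * Real.sqrt 2 - 2) / 2 - 1/4)
    (hmc : mc = 2 - Real.sqrt 2) :
    mc ∈ Set.Icc (0:ℝ) 1 ∧
    (∀ m ∈ Set.Icc (0:ℝ) 1, ptilde J h m ≤ ptilde J h mc) ∧
    (∀ m ∈ Set.Icc (0:ℝ) 1, ptilde J h m = ptilde J h mc → m = mc) ∧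
    0 < -iteratedDeriv 4 (ptilde J h) mc ∧
    ∃ K : ℝ, ∀ N : ℕ, 1 ≤ N → ∀ z : ℝ,
      |probDim N J h
          (fun D => (((monomers D).card : ℝ) - N * mc) / (N:ℝ) ^ ((3:ℝ)/4) ≤ z)
        - (∫ t in Set.Iic z, Real.exp (iteratedDeriv 4 (ptilde J h) mc * t^4 / 24)) /
            ∫ t : ℝ, Real.exp (iteratedDeriv 4 (ptilde J h) mc * t^4 / 24)|
      ≤ K / (N:ℝ) ^ ((1:ℝ)/4) := by
  have hc := isCritical_of_eq hJ hh hmc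
  refine ⟨⟨hc.pos.le, hc.lt_one.le⟩, fun m hm => ?_, fun m hm heq => ?_, ?_, ?_⟩
  · rcases eq_or_ne m mc with rfl | hne
    · exact le_rfl
    · exact (hc.ptilde_lt hm.1 hne).le
  · by_contra hne
    exact (hc.ptilde_lt hm.1 hne).ne heq
  · rw [hc.iteratedDeriv_four_ptilde_eq, neg_neg]
    exact hc.criticalLambda_pos
  · have hexponent (t : ℝ) : -criticalLambda J mc * t ^ 4 / 24 =
        -(criticalLambda J mc / 24) * t ^ 4 := by ring
    simp only [hc.iteratedDeriv_four_ptilde_eq, hexponent, ← densityCDF_quarticDensity]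
    exact hc.exists_abs_probDim_sub_densityCDF_le
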